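/- arXiv:1406.6825 — 6 statements merged into one kernel-verified Lean document; each statement's English description precedes it below -/
import Mathlib

section
/- Mönch's continuation theorem: Let X be a real Banach space, U an open subset of X, and N : cl(U) → X a continuous map. Assume that for some u₀ ∈ U: (a) for every u in the boundary of U and every real λ > 1, N(u) − u₀ ≠ λ·(u − u₀); and (b) for every countable set C ⊆ cl(U) with C ⊆ closure(convexHull({u₀} ∪ N(C))), the closure of C is compact. Then N has a fixed point in cl(U). -/
/-!
A Urysohn function `φ` that vanishes off `U` and equals `1` on the solutions of
`u = u₀ + l • (N u - u₀)`, `0 ≤ l ≤ 1`, turns `N` into a continuous map `F = u₀ + φ • (N - u₀)` on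
the whole space, whose fixed points are fixed points of `N`: by (a) no solution lies on the
boundary of `U`.

The smallest convex set `M` that contains `u₀` and is mapped to itself by `F` is separable and
equals `convexHull ({u₀} ∪ F(M))`. A countable dense subset `C` of `M` therefore
satisfies `C ⊆ closure (convexHull ({u₀} ∪ F(C)))`. As `F = u₀` off `U` and `F` lies on the segment
from `u₀` to `N` in `U`, condition (b) applies to `C ∩ U` and makes
`closure (F(C))` compact, and `F` maps the closure of `M` into this compact set.

Schauder's theorem then gives a fixed point. It reduces to Brouwer's theorem on a simplex by
partitions of unity, and Brouwer's theorem is obtained from Scarf's lemma: for finitely many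
linear orders on a finite set enlarged by one slack point for each order, some dominating set
contains a point of every colour. As in Sperner's lemma, this is a parity argument: a set that
carries all colours but one and is not made of slack points has no or exactly two completions to
a dominating set, whereas the set of slack points of those colours has exactly one.
-/

section Sperner

open Finset

variable {V I : Type*} [DecidableEq V]

theorem sum_card_insert_mem_eq_sum_card_erase_mem [Fintype V] (D R : Finset (Finset V)) :
    ∑ τ ∈ D, #{y | y ∉ τ ∧ insert y τ ∈ R} = ∑ σ ∈ R, #{x ∈ σ | σ.erase x ∈ D} := by
  rw [← card_sigma, ← card_sigma]
  refine card_nbij' (fun p ↦ ⟨insert p.2 p.1, p.2⟩) (fun p ↦ ⟨p.1.erase p.2, p.2⟩) ?_ ?_ ?_ ?_ <;>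
    rintro ⟨s, x⟩ h <;> simp_all

variable [Fintype I] [DecidableEq I] {c : V → I} {σ : Finset V} {i₀ : I}

theorem injOn_erase_of_image_erase_eq (hσ : #σ = Fintype.card I) {x : V} (hx : x ∈ σ)
    (hxc : (σ.erase x).image c = univ.erase i₀) : Set.InjOn c (σ.erase x) := by
  rw [← card_image_iff, hxc, card_erase_of_mem hx, card_erase_of_mem (mem_univ _), hσ, card_univ]

theorem filter_image_erase_eq_singleton (hσ : #σ = Fintype.card I) (hσc : σ.image c = univ) :
    ∃ x, {x ∈ σ | (σ.erase x).image c = univ.erase i₀} = {x} := by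
  have hinj : Set.InjOn c σ := by rw [← card_image_iff, hσc, hσ, card_univ]
  have hsurj (i : I) : ∃ x ∈ σ, c x = i := mem_image.mp (hσc ▸ mem_univ i)
  obtain ⟨x₀, hx₀, rfl⟩ := hsurj i₀
  refine ⟨x₀, ext fun x ↦ ?_⟩
  rw [mem_filter, mem_singleton]
  constructor
  · rintro ⟨-, hxc⟩
    by_contra hne
    have hmem : c x₀ ∈ (σ.erase x).image c :=
      mem_image_of_mem c (mem_erase.mpr ⟨Ne.symm hne, hx₀⟩)
    exact notMem_erase (c x₀) univ (hxc ▸ hmem)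
  · rintro rfl
    refine ⟨hx₀, ext fun i ↦ ?_⟩
    obtain ⟨z, hz, rfl⟩ := hsurj i
    simp only [mem_image, mem_erase, mem_univ, and_true]
    constructor
    · rintro ⟨w, ⟨hwx, hw⟩, hwz⟩ hzx
      exact hwx (hinj hw hx₀ (hwz.trans hzx))
    · exact fun hzx ↦ ⟨z, ⟨fun h ↦ hzx (h ▸ rfl), hz⟩, rfl⟩

theorem filter_image_erase_eq_pair (hσ : #σ = Fintype.card I) (hσc : σ.image c ≠ univ) {x : V}
    (hx : x ∈ σ) (hxc : (σ.erase x).image c = univ.erase i₀) :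
    ∃ y, x ≠ y ∧ {x ∈ σ | (σ.erase x).image c = univ.erase i₀} = {x, y} := by
  have himage {z : V} (hz : z ∈ σ) : insert (c z) ((σ.erase z).image c) = σ.image c := by
    rw [← image_insert, insert_erase hz]
  have hcx : c x ∈ (σ.erase x).image c := by
    rw [hxc, mem_erase]
    refine ⟨?_, mem_univ _⟩
    rintro rfl
    exact hσc (by rw [← himage hx, hxc, insert_erase (mem_univ _)])
  obtain ⟨y, hy, hyx⟩ := mem_image.mp hcx
  obtain ⟨hne, hyσ⟩ := mem_erase.mp hy
  have hcy : c y ∈ (σ.erase y).image c :=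
    mem_image.mpr ⟨x, mem_erase.mpr ⟨hne.symm, hx⟩, hyx.symm⟩
  have hyc : (σ.erase y).image c = univ.erase i₀ := by
    rw [← hxc, ← insert_eq_of_mem hcy, himage hyσ, ← himage hx, insert_eq_of_mem hcx]
  refine ⟨y, hne.symm, ext fun z ↦ ?_⟩
  simp only [mem_filter, mem_insert, mem_singleton]
  constructor
  · rintro ⟨hz, hzc⟩
    by_contra! hz_ne
    exact hne <| injOn_erase_of_image_erase_eq hσ hz hzc
      (mem_erase.mpr ⟨hz_ne.2.symm, hyσ⟩) (mem_erase.mpr ⟨hz_ne.1.symm, hx⟩) hyx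
  · rintro (rfl | rfl)
    exacts [⟨hx, hxc⟩, ⟨hyσ, hyc⟩]

theorem odd_card_image_erase_iff (hσ : #σ = Fintype.card I) :
    Odd #{x ∈ σ | (σ.erase x).image c = univ.erase i₀} ↔ σ.image c = univ := by
  constructor
  · intro hodd
    by_contra hσc
    obtain ⟨x, hx⟩ := card_pos.mp hodd.pos
    obtain ⟨hxσ, hxc⟩ := mem_filter.mp hx
    obtain ⟨y, hxy, hpair⟩ := filter_image_erase_eq_pair hσ hσc hxσ hxc
    rw [hpair, card_pair hxy] at hodd
    exact Nat.not_odd_iff_even.mpr even_two hodd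
  · intro hσc
    obtain ⟨x, hx⟩ := filter_image_erase_eq_singleton (i₀ := i₀) hσ hσc
    rw [hx, card_singleton]
    exact odd_one

theorem exists_image_eq_univ_of_odd [Fintype V] {R : Finset (Finset V)}
    (hR : ∀ σ ∈ R, #σ = Fintype.card I) (c : V → I) (i₀ : I)
    (hodd : Odd #{τ | τ.image c = univ.erase i₀ ∧ Odd #{y | y ∉ τ ∧ insert y τ ∈ R}}) :
    ∃ σ ∈ R, σ.image c = univ := by
  rw [← filter_filter, ← odd_sum_iff_odd_card_odd, sum_card_insert_mem_eq_sum_card_erase_mem,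
    odd_sum_iff_odd_card_odd] at hodd
  obtain ⟨σ, hσ⟩ := card_pos.mp hodd.pos
  simp only [mem_filter, mem_univ, true_and] at hσ
  exact ⟨σ, hσ.1, (odd_card_image_erase_iff (hR σ hσ.1)).mp hσ.2⟩

end Sperner

section Scarf

open Finset

variable {V I α : Type*} [LinearOrder α] {r : I → V → α} {σ τ : Finset V} {d : I} {y : V}

/-- Scarf's notion of a dominating set for the family of orders on `V` induced by the functions
`r i`: no point of `V` lies, in every order, strictly above the minimum of `σ`. -/
def IsDominating (r : I → V → α) (σ : Finset V) : Prop :=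
  ∀ y, ∃ i, ∀ x ∈ σ, r i y ≤ r i x

/-- The order `r d` is redundant for `τ` if every point of `τ` is the minimum of `τ` for one of the
other orders. -/
def IsRedundant (r : I → V → α) (τ : Finset V) (d : I) : Prop :=
  ∀ x ∈ τ, ∃ i ≠ d, ∀ z ∈ τ, r i x ≤ r i z

/-- The points that lie strictly above the minimum of `τ` in every order but `r d`. Their maximum
for `r d` is the point by which a pivot step in the direction `d` completes `τ`. -/
def pivotSet (r : I → V → α) (τ : Finset V) (d : I) : Set V :=
  {y | ∀ i ≠ d, ∃ x ∈ τ, r i x < r i y}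

theorem IsDominating.anti (hσ : IsDominating r σ) (h : τ ⊆ σ) : IsDominating r τ := fun y ↦
  (hσ y).imp fun _ hi x hx ↦ hi x (h hx)

theorem exists_argmin (hr : ∀ i, Function.Injective (r i)) (hτ : τ.Nonempty) :
    ∃ a : I → V, ∀ i x, a i = x ↔ x ∈ τ ∧ ∀ z ∈ τ, r i x ≤ r i z := by
  choose a haτ ha using fun i ↦ τ.exists_min_image (r i) hτ
  refine ⟨a, fun i x ↦ ⟨?_, fun ⟨hx, hmin⟩ ↦ hr i ((ha i x hx).antisymm (hmin _ (haτ i)))⟩⟩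
  rintro rfl
  exact ⟨haτ i, ha i⟩

theorem IsDominating.notMem_pivotSet {d' : I} (hτ : IsDominating r τ) (hd : d ≠ d')
    (hy : y ∈ pivotSet r τ d) : y ∉ pivotSet r τ d' := by
  intro hy'
  obtain ⟨i, hi⟩ := hτ y
  obtain ⟨x, hx, hxy⟩ : ∃ x ∈ τ, r i x < r i y := by
    by_cases hid : i = d
    exacts [hy' i (hid ▸ hd), hy i hid]
  exact (hi x hx).not_gt hxy

theorem IsRedundant.notMem_of_mem_pivotSet (hd : IsRedundant r τ d) (hy : y ∈ pivotSet r τ d) :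
    y ∉ τ := by
  intro hyτ
  obtain ⟨i, hid, hi⟩ := hd y hyτ
  obtain ⟨x, hx, hxy⟩ := hy i hid
  exact (hi x hx).not_gt hxy

theorem IsDominating.insert_of_isMaxOn [DecidableEq V] (hτ : IsDominating r τ)
    (hy : y ∈ pivotSet r τ d) (hmax : IsMaxOn (r d) (pivotSet r τ d) y) :
    IsDominating r (insert y τ) := by
  intro z
  simp only [forall_mem_insert]
  by_cases hz : z ∈ pivotSet r τ d
  · obtain ⟨i, hi⟩ := hτ z
    obtain rfl : i = d := by
      by_contra hid
      obtain ⟨x, hx, hxz⟩ := hz i hid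
      exact (hi x hx).not_gt hxz
    exact ⟨i, hmax hz, hi⟩
  · obtain ⟨i, hid, hi⟩ : ∃ i ≠ d, ∀ x ∈ τ, r i z ≤ r i x := by simpa [pivotSet] using hz
    obtain ⟨x, hx, hxy⟩ := hy i hid
    exact ⟨i, (hi x hx).trans hxy.le, hi⟩

section Pivot

variable [Fintype I]

theorem IsRedundant.injOn_argmin {a : I → V} (hd : IsRedundant r τ d)
    (ha : ∀ i x, a i = x ↔ x ∈ τ ∧ ∀ z ∈ τ, r i x ≤ r i z) (hcard : #τ + 1 = Fintype.card I) :
    Set.InjOn a {d}ᶜ := by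
  classical
  have himage : (univ.erase d).image a = τ := by
    ext x
    simp only [mem_image, mem_erase, mem_univ, and_true]
    constructor
    · rintro ⟨i, -, hix⟩
      exact ((ha i x).mp hix).1
    · intro hx
      obtain ⟨i, hid, hi⟩ := hd x hx
      exact ⟨i, hid, (ha i x).mpr ⟨hx, hi⟩⟩
  rw [← coe_singleton, ← coe_compl, compl_singleton, ← card_image_iff, himage,
    card_erase_of_mem (mem_univ d), card_univ, ← hcard, Nat.add_sub_cancel]

theorem IsDominating.exists_isRedundant_iff_eq_or_eq (hr : ∀ i, Function.Injective (r i))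
    (hτ : IsDominating r τ) (hτne : τ.Nonempty) (hcard : #τ + 1 = Fintype.card I) :
    ∃ d₁ d₂, d₁ ≠ d₂ ∧ ∀ d, IsRedundant r τ d ↔ d = d₁ ∨ d = d₂ := by
  obtain ⟨a, ha⟩ := exists_argmin hr hτne
  obtain ⟨d₁, -, d₂, -, hne, heq⟩ : ∃ d₁ ∈ univ, ∃ d₂ ∈ univ, d₁ ≠ d₂ ∧ a d₁ = a d₂ :=
    exists_ne_map_eq_of_card_lt_of_maps_to (t := τ) (by rw [card_univ]; omega)
      fun i _ ↦ ((ha i _).mp rfl).1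
  refine ⟨d₁, d₂, hne, fun d ↦ ⟨fun hd ↦ ?_, fun hd x hx ↦ ?_⟩⟩
  · by_contra! hd_ne
    exact hne <| hd.injOn_argmin ha hcard hd_ne.1.symm hd_ne.2.symm heq
  · obtain ⟨j, hj⟩ := hτ x
    have hjx := (ha j x).mpr ⟨hx, hj⟩
    suffices ∃ i ≠ d, a i = x by
      obtain ⟨i, hid, hix⟩ := this
      exact ⟨i, hid, ((ha i x).mp hix).2⟩
    by_cases hjd : j = d
    · subst hjd
      rcases hd with rfl | rfl
      exacts [⟨d₂, hne.symm, heq ▸ hjx⟩, ⟨d₁, hne, heq ▸ hjx⟩]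
    · exact ⟨j, hjd, hjx⟩

variable [DecidableEq V]

theorem IsDominating.exists_isRedundant_of_insert (hr : ∀ i, Function.Injective (r i))
    (hσ : IsDominating r (insert y τ)) (hy : y ∉ τ) (hτne : τ.Nonempty)
    (hcard : #τ + 1 = Fintype.card I) :
    ∃ d, IsRedundant r τ d ∧ y ∈ pivotSet r τ d ∧ IsMaxOn (r d) (pivotSet r τ d) y := by
  obtain ⟨a, ha⟩ := exists_argmin hr hτne
  simp only [IsDominating, forall_mem_insert] at hσ
  obtain ⟨d, -, hdy⟩ := hσ y
  have hexposed (x : V) (hx : x ∈ τ) : ∃ i ≠ d, r i x ≤ r i y ∧ ∀ z ∈ τ, r i x ≤ r i z := by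
    obtain ⟨i, hiy, hi⟩ := hσ x
    refine ⟨i, ?_, hiy, hi⟩
    rintro rfl
    exact hy (hr i (hiy.antisymm (hdy x hx)) ▸ hx)
  have hd : IsRedundant r τ d := fun x hx ↦
    (hexposed x hx).imp fun i hi ↦ ⟨hi.1, hi.2.2⟩
  refine ⟨d, hd, fun i hid ↦ ?_, fun z hz ↦ ?_⟩
  · have haτ : a i ∈ τ := ((ha i _).mp rfl).1
    obtain ⟨j, hjd, hjy, hj⟩ := hexposed (a i) haτ
    obtain rfl : j = i := hd.injOn_argmin ha hcard hjd hid ((ha j _).mpr ⟨haτ, hj⟩)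
    exact ⟨a j, haτ, hjy.lt_of_ne fun h ↦ hy (hr j h ▸ haτ)⟩
  · obtain ⟨i, hiy, hi⟩ := hσ z
    obtain rfl : i = d := by
      by_contra hid
      obtain ⟨x, hx, hxz⟩ := hz i hid
      exact (hi x hx).not_gt hxz
    exact hiy

theorem IsDominating.exists_insert_iff_eq_or_eq [Finite V] (hr : ∀ i, Function.Injective (r i))
    (hτ : IsDominating r τ) (hτne : τ.Nonempty) (hcard : #τ + 1 = Fintype.card I)
    (hpivot : ∀ d, (pivotSet r τ d).Nonempty) :
    ∃ y₁ y₂, y₁ ≠ y₂ ∧ ∀ y, y ∉ τ ∧ IsDominating r (insert y τ) ↔ y = y₁ ∨ y = y₂ := by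
  obtain ⟨d₁, d₂, hne, hd⟩ := hτ.exists_isRedundant_iff_eq_or_eq hr hτne hcard
  choose p hp hpmax using fun d ↦
    Set.exists_max_image (pivotSet r τ d) (r d) (Set.toFinite _) (hpivot d)
  refine ⟨p d₁, p d₂, fun h ↦ hτ.notMem_pivotSet hne (hp d₁) (h ▸ hp d₂), fun y ↦ ⟨?_, ?_⟩⟩
  · rintro ⟨hy, hσ⟩
    obtain ⟨d, hdred, hyd, hymax⟩ := hσ.exists_isRedundant_of_insert hr hy hτne hcard
    obtain rfl : y = p d := hr d ((hpmax d y hyd).antisymm (hymax (hp d)))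
    exact ((hd d).mp hdred).imp (congrArg p) (congrArg p)
  · have hinsert (d : I) (h : d = d₁ ∨ d = d₂) : p d ∉ τ ∧ IsDominating r (insert (p d) τ) :=
      ⟨((hd d).mpr h).notMem_of_mem_pivotSet (hp d), hτ.insert_of_isMaxOn (hp d) (hpmax d)⟩
    rintro (rfl | rfl)
    exacts [hinsert d₁ (.inl rfl), hinsert d₂ (.inr rfl)]

/-- Slack points for the orders `r i`: one point `s i` for each order, lowest for `r i` and, for
every other order, above all points that are not slack. -/
structure IsSlack (r : I → V → α) (s : I → V) : Prop where
  injective : Function.Injective s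
  le : ∀ i v, r i (s i) ≤ r i v
  lt : ∀ i j v, j ≠ i → v ∉ Set.range s → r i v < r i (s j)

theorem IsSlack.even_card_insert_mem [Fintype V] {R : Finset (Finset V)} {s : I → V}
    (hs : IsSlack r s) (hr : ∀ i, Function.Injective (r i))
    (hR : ∀ σ, σ ∈ R ↔ #σ = Fintype.card I ∧ IsDominating r σ) {v : V} (hvτ : v ∈ τ)
    (hv : v ∉ Set.range s) : Even #{y | y ∉ τ ∧ insert y τ ∈ R} := by
  obtain hempty | ⟨y, hy⟩ := (filter (fun y ↦ y ∉ τ ∧ insert y τ ∈ R) univ).eq_empty_or_nonempty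
  · simp [hempty]
  obtain ⟨hyτ, hyR⟩ := (mem_filter.mp hy).2
  obtain ⟨hcard, hσ⟩ := (hR _).mp hyR
  rw [card_insert_of_notMem hyτ] at hcard
  have hpivot (d : I) : (pivotSet r τ d).Nonempty :=
    ⟨s d, fun i hid ↦ ⟨v, hvτ, hs.lt i d v hid.symm hv⟩⟩
  obtain ⟨y₁, y₂, hne, hiff⟩ :=
    (hσ.anti (subset_insert y τ)).exists_insert_iff_eq_or_eq hr ⟨v, hvτ⟩ hcard hpivot
  have hpair : ({y | y ∉ τ ∧ insert y τ ∈ R} : Finset V) = {y₁, y₂} := by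
    ext z
    rw [mem_filter_univ, mem_insert, mem_singleton, ← hiff z]
    refine and_congr_right fun hz ↦ ?_
    rw [hR, card_insert_of_notMem hz, and_iff_right hcard]
  rw [hpair, card_pair hne]
  exact even_two

variable [DecidableEq I]

theorem IsSlack.exists_insert_iff_eq [Finite V] {s : I → V} (hs : IsSlack r s)
    (hr : ∀ i, Function.Injective (r i)) (i₀ : I) :
    ∃ y₀, ∀ y, y ∉ (univ.erase i₀).image s ∧
      IsDominating r (insert y ((univ.erase i₀).image s)) ↔ y = y₀ := by
  set τ := (univ.erase i₀).image s
  have hmem (j : I) (hj : j ≠ i₀) : s j ∈ τ := mem_image_of_mem s (by simpa using hj)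
  have hle (v : V) (hv : v ∉ τ) (x : V) (hx : x ∈ τ) : r i₀ v ≤ r i₀ x := by
    obtain ⟨j, hj, rfl⟩ := mem_image.mp hx
    by_cases hvs : v ∈ Set.range s
    · obtain ⟨k, rfl⟩ := hvs
      obtain rfl : k = i₀ := not_imp_comm.mp (hmem k) hv
      exact hs.le k _
    · exact (hs.lt i₀ j v (ne_of_mem_erase hj) hvs).le
  have hcompl : ({v | v ∉ τ} : Set V).Nonempty := ⟨s i₀, by simp [τ, hs.injective.eq_iff]⟩
  obtain ⟨y₀, hy₀, hy₀max⟩ := Set.exists_max_image {v | v ∉ τ} (r i₀) (Set.toFinite _) hcompl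
  refine ⟨y₀, fun y ↦ ⟨fun ⟨hy, hσ⟩ ↦ ?_, ?_⟩⟩
  · obtain ⟨i, hi⟩ := hσ y₀
    rw [forall_mem_insert] at hi
    obtain rfl : i = i₀ := by
      by_contra hii₀
      exact hy₀ (hr i ((hi.2 _ (hmem i hii₀)).antisymm (hs.le i y₀)) ▸ hmem i hii₀)
    exact hr i ((hy₀max y hy).antisymm hi.1)
  · rintro rfl
    refine ⟨hy₀, fun z ↦ ?_⟩
    simp only [forall_mem_insert]
    by_cases hz : z ∈ τ
    · obtain ⟨j, -, rfl⟩ := mem_image.mp hz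
      exact ⟨j, hs.le j y, fun x _ ↦ hs.le j x⟩
    · exact ⟨i₀, hy₀max z hz, hle z hz⟩

theorem IsSlack.odd_card_insert_mem [Fintype V] {R : Finset (Finset V)} {s : I → V} {i₀ : I}
    (hs : IsSlack r s) (hr : ∀ i, Function.Injective (r i))
    (hR : ∀ σ, σ ∈ R ↔ #σ = Fintype.card I ∧ IsDominating r σ) :
    Odd #{y | y ∉ (univ.erase i₀).image s ∧ insert y ((univ.erase i₀).image s) ∈ R} := by
  obtain ⟨y₀, hy₀⟩ := hs.exists_insert_iff_eq hr i₀
  have hsingleton : ({y | y ∉ (univ.erase i₀).image s ∧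
      insert y ((univ.erase i₀).image s) ∈ R} : Finset V) = {y₀} := by
    ext z
    rw [mem_filter_univ, mem_singleton, ← hy₀ z]
    refine and_congr_right fun hz ↦ ?_
    rw [hR, card_insert_of_notMem hz, card_image_of_injective _ hs.injective,
      card_erase_add_one (mem_univ i₀), card_univ, and_iff_right rfl]
  rw [hsingleton, card_singleton]
  exact odd_one

end Pivot

theorem IsSlack.exists_isDominating_forall_color [Finite V] [Finite I] [Nonempty I] {s : I → V}
    (hs : IsSlack r s) (hr : ∀ i, Function.Injective (r i)) {c : V → I} (hc : ∀ i, c (s i) = i) :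
    ∃ σ, IsDominating r σ ∧ ∀ i, ∃ x ∈ σ, c x = i := by
  classical
  have := Fintype.ofFinite V
  have := Fintype.ofFinite I
  obtain ⟨i₀⟩ := ‹Nonempty I›
  let R : Finset (Finset V) := {σ | #σ = Fintype.card I ∧ IsDominating r σ}
  have hR (σ : Finset V) : σ ∈ R ↔ #σ = Fintype.card I ∧ IsDominating r σ := mem_filter_univ σ
  have hboundary : ({τ | τ.image c = univ.erase i₀ ∧
      Odd #{y | y ∉ τ ∧ insert y τ ∈ R}} : Finset (Finset V)) = {(univ.erase i₀).image s} := by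
    ext τ
    rw [mem_filter_univ, mem_singleton]
    constructor
    · rintro ⟨hτc, hodd⟩
      have hslack (v : V) (hv : v ∈ τ) : s (c v) = v := by
        by_contra hsv
        refine Nat.not_odd_iff_even.mpr (hs.even_card_insert_mem hr hR hv ?_) hodd
        rintro ⟨i, rfl⟩
        exact hsv (congrArg s (hc i))
      rw [← hτc, image_image, image_congr (f := s ∘ c) (g := id) hslack, image_id]
    · rintro rfl
      refine ⟨?_, hs.odd_card_insert_mem hr hR⟩
      rw [image_image, image_congr (f := c ∘ s) (g := id) fun i _ ↦ hc i, image_id]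
  obtain ⟨σ, hσR, hσc⟩ := exists_image_eq_univ_of_odd (fun σ hσ ↦ ((hR σ).mp hσ).1) c i₀
    (by rw [hboundary, card_singleton]; exact odd_one)
  exact ⟨σ, ((hR σ).mp hσR).2, fun i ↦ mem_image.mp (hσc ▸ mem_univ i)⟩

/-- The family of orders `κ` extended to one slack point for each order. An arbitrary enumeration
of the points breaks ties. -/
noncomputable def slackOrder {T β : Type*} [Fintype T] [Fintype I] [DecidableEq I] (κ : I → T → β)
    (i : I) (v : T ⊕ I) : WithBot (WithTop β) ×ₗ Fin (Fintype.card (T ⊕ I)) :=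
  toLex (Sum.elim (fun x ↦ ↑(κ i x : WithTop β)) (fun j ↦ if j = i then ⊥ else ⊤) v,
    Fintype.equivFin (T ⊕ I) v)

theorem slackOrder_injective {T β : Type*} [Fintype T] [Fintype I] [DecidableEq I]
    (κ : I → T → β) (i : I) : Function.Injective (slackOrder κ i) := fun _ _ h ↦
  (Fintype.equivFin (T ⊕ I)).injective (congrArg Prod.snd (toLex_inj.mp h))

theorem isSlack_slackOrder {T β : Type*} [Fintype T] [Fintype I] [DecidableEq I] [LinearOrder β]
    (κ : I → T → β) : IsSlack (slackOrder κ) Sum.inr where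
  injective := Sum.inr_injective
  le i v := by
    by_cases hv : v = Sum.inr i
    · rw [hv]
    refine (Prod.Lex.toLex_lt_toLex.mpr (.inl ?_)).le
    rcases v with x | j
    · simp
    · have hji : j ≠ i := fun h ↦ hv (h ▸ rfl)
      simp [hji]
  lt i j v hji hv := by
    rcases v with x | k
    · refine Prod.Lex.toLex_lt_toLex.mpr (.inl ?_)
      simpa [hji] using WithBot.coe_lt_coe.mpr (WithTop.coe_lt_top (κ i x))
    · exact absurd ⟨k, rfl⟩ hv

theorem le_of_slackOrder_inl_le {T β : Type*} [Fintype T] [Fintype I] [DecidableEq I]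
    [LinearOrder β] {κ : I → T → β} {i : I} {x y : T}
    (h : slackOrder κ i (.inl x) ≤ slackOrder κ i (.inl y)) : κ i x ≤ κ i y := by
  rcases Prod.Lex.toLex_le_toLex.mp h with h | h
  · exact (by simpa using h : κ i x < κ i y).le
  · exact (by simpa using h.1 : κ i x = κ i y).le

theorem exists_forall_le_color {T I β : Type*} [Finite T] [Nonempty T] [Finite I] [LinearOrder β]
    (κ : I → T → β) (c : T → I) :
    ∃ σ : Finset T, ∀ y, ∃ z ∈ σ, ∀ x ∈ σ, κ (c z) y ≤ κ (c z) x := by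
  classical
  have := Fintype.ofFinite T
  have := Fintype.ofFinite I
  have : Nonempty I := Nonempty.map c ‹_›
  obtain ⟨σ, hσ, hσc⟩ := (isSlack_slackOrder κ).exists_isDominating_forall_color
    (slackOrder_injective κ) (c := Sum.elim c id) fun _ ↦ rfl
  refine ⟨σ.preimage Sum.inl Sum.inl_injective.injOn, fun y ↦ ?_⟩
  obtain ⟨i, hi⟩ := hσ (Sum.inl y)
  obtain ⟨z | j, hz, rfl⟩ := hσc i
  · exact ⟨z, mem_preimage.mpr hz, fun x hx ↦ le_of_slackOrder_inl_le (hi _ (mem_preimage.mp hx))⟩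
  · have hlow : slackOrder κ j (.inr j) < slackOrder κ j (.inl y) :=
      ((isSlack_slackOrder κ).le j _).lt_of_ne ((slackOrder_injective κ j).ne Sum.inr_ne_inl)
    exact absurd (hi _ hz) hlow.not_ge

end Scarf

section Brouwer

variable {I : Type*} [Fintype I]

theorem exists_grid_forall_le_color (m : ℕ) (c : (I → ℕ) → I) :
    ∃ σ : Finset (I → ℕ), (∀ x ∈ σ, ∑ i, x i = m) ∧
      ∀ y : I → ℕ, ∑ i, y i = m → ∃ z ∈ σ, ∀ x ∈ σ, y (c z) ≤ x (c z) := by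
  classical
  let T := Finset.piAntidiag (Finset.univ : Finset I) m
  have hT (x : I → ℕ) : x ∈ T ↔ ∑ i, x i = m := by simp [T]
  have : Nonempty T := ⟨Pi.single (c 0) m, by simp [hT]⟩
  obtain ⟨σ, hσ⟩ := exists_forall_le_color (fun (i : I) (x : T) ↦ x.1 i) (fun x ↦ c x)
  refine ⟨σ.map (Function.Embedding.subtype _), fun x hx ↦ ?_, fun y hy ↦ ?_⟩
  · obtain ⟨x, -, rfl⟩ := Finset.mem_map.mp hx
    exact (hT x).mp x.2
  · obtain ⟨z, hz, hzσ⟩ := hσ ⟨y, (hT y).mpr hy⟩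
    exact ⟨z, Finset.mem_map_of_mem _ hz, Finset.forall_mem_map.mpr hzσ⟩

theorem exists_grid_lower_corner (m : ℕ) (c : (I → ℕ) → I) :
    ∃ (σ : Finset (I → ℕ)) (b : I → ℕ), σ.Nonempty ∧ (∀ x ∈ σ, ∑ i, x i = m ∧ b ≤ x) ∧
      m ≤ ∑ i, b i + Fintype.card I ∧ ∀ i, b i = 0 ∨ ∃ z ∈ σ, c z = i := by
  classical
  obtain ⟨σ, hσm, hσ⟩ := exists_grid_forall_le_color m c
  obtain ⟨z₀, hz₀, -⟩ := hσ (Pi.single (c 0) m) (by simp)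
  choose a haσ ha using fun i ↦ σ.exists_min_image (fun x ↦ x i) ⟨z₀, hz₀⟩
  let b (i : I) : ℕ := if ∃ z ∈ σ, c z = i then a i i else 0
  have hb {z : I → ℕ} (hz : z ∈ σ) : b (c z) = a (c z) (c z) := if_pos ⟨z, hz, rfl⟩
  refine ⟨σ, b, ⟨z₀, hz₀⟩, fun x hx ↦ ⟨hσm x hx, fun i ↦ ?_⟩, ?_, fun i ↦ ?_⟩
  · dsimp only [b]
    split_ifs
    exacts [ha i x hx, Nat.zero_le _]
  · by_contra! hlt
    -- A grid point strictly above `b` in every coordinate would not be dominated by `σ`.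
    let y : I → ℕ := b + 1 + Pi.single (c z₀) (m - (∑ i, b i + Fintype.card I))
    have hy : ∑ i, y i = m := by
      simp only [y, Pi.add_apply, Pi.one_apply, Finset.sum_add_distrib,
        Fintype.sum_pi_single', Finset.sum_const, Finset.card_univ, smul_eq_mul, mul_one]
      omega
    obtain ⟨z, hz, hyσ⟩ := hσ y hy
    have hby : b (c z) + 1 ≤ y (c z) := Nat.le_add_right _ _
    exact (hby.trans (hyσ _ (haσ (c z)))).not_gt (Nat.lt_succ_of_le (hb hz).ge)
  · dsimp only [b]
    split_ifs with h
    exacts [.inr h, .inl rfl]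

theorem exists_grid_near_colors [Nonempty I] {m : ℕ} {P : (I → ℕ) → I → Prop}
    (hP : ∀ x, ∑ i, x i = m → ∃ i, P x i) :
    ∃ x : I → ℕ, ∑ i, x i = m ∧ ∀ i, x i ≤ Fintype.card I ∨ ∃ z, ∑ j, z j = m ∧ P z i ∧
      ∀ j, x j ≤ z j + Fintype.card I ∧ z j ≤ x j + Fintype.card I := by
  choose! c hc using hP
  obtain ⟨σ, b, ⟨x, hx⟩, hσ, hb, hbc⟩ := exists_grid_lower_corner m c
  have hle (z : I → ℕ) (hz : z ∈ σ) (i : I) : z i ≤ b i + Fintype.card I := by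
    have hsum : ∑ j, (z j - b j) ≤ Fintype.card I := by
      have := Finset.sum_tsub_distrib Finset.univ fun j _ ↦ (hσ z hz).2 j
      have := (hσ z hz).1
      omega
    have := Finset.single_le_sum_of_canonicallyOrdered (f := fun j ↦ z j - b j) (Finset.mem_univ i)
    omega
  refine ⟨x, (hσ x hx).1, fun i ↦ (hbc i).imp (fun hi ↦ ?_) ?_⟩
  · simpa [hi] using hle x hx i
  · rintro ⟨z, hz, rfl⟩
    exact ⟨z, (hσ z hz).1, hc z (hσ z hz).1, fun j ↦
      ⟨(hle x hx j).trans (Nat.add_le_add_right ((hσ z hz).2 j) _),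
        (hle z hz j).trans (Nat.add_le_add_right ((hσ x hx).2 j) _)⟩⟩

theorem exists_mem_stdSimplex_forall_sub_le [Nonempty I] {f : (I → ℝ) → I → ℝ}
    (hf : ContinuousOn f (stdSimplex ℝ I)) (hmaps : Set.MapsTo f (stdSimplex ℝ I) (stdSimplex ℝ I))
    {ε : ℝ} (hε : 0 < ε) : ∃ x ∈ stdSimplex ℝ I, ∀ i, x i - f x i ≤ ε := by
  obtain ⟨δ, hδ, hfδ⟩ := Metric.uniformContinuousOn_iff.mp
    ((isCompact_stdSimplex ℝ I).uniformContinuousOn_of_continuous hf) (ε / 2) (half_pos hε)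
  obtain ⟨m, hm⟩ := exists_nat_gt (Fintype.card I / min δ (ε / 2))
  have hmin : 0 < min δ (ε / 2) := lt_min hδ (half_pos hε)
  have hm0 : (0 : ℝ) < m := hm.trans_le' (by positivity)
  obtain ⟨hmδ, hmε⟩ : Fintype.card I / (m : ℝ) < δ ∧ Fintype.card I / (m : ℝ) < ε / 2 := by
    rw [← lt_min_iff, div_lt_comm₀ hm0 hmin]
    exact hm
  let p (x : I → ℕ) (i : I) : ℝ := x i / m
  have hp (x : I → ℕ) (hx : ∑ i, x i = m) : p x ∈ stdSimplex ℝ I := by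
    refine ⟨fun i ↦ by positivity, ?_⟩
    rw [← Finset.sum_div, ← Nat.cast_sum, hx, div_self hm0.ne']
  have hcolor (x : I → ℕ) (hx : ∑ i, x i = m) : ∃ i, p x i ≤ f (p x) i := by
    obtain ⟨i, -, hi⟩ := Finset.exists_le_of_sum_le Finset.univ_nonempty
      ((hp x hx).2.trans (hmaps (hp x hx)).2.symm).le
    exact ⟨i, hi⟩
  have hp_le {a b : ℕ} (h : a ≤ b + Fintype.card I) :
      (a / m : ℝ) ≤ b / m + Fintype.card I / m := by
    rw [← add_div]
    gcongr
    exact_mod_cast h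
  obtain ⟨x, hx, hnear⟩ := exists_grid_near_colors hcolor
  refine ⟨p x, hp x hx, fun i ↦ ?_⟩
  rcases hnear i with hi | ⟨z, hz, hzi, hxz⟩
  · have hxi : p x i ≤ Fintype.card I / m := by simpa [p] using hp_le (b := 0) (by simpa using hi)
    linarith [(hmaps (hp x hx)).1 i]
  · have hdist : dist (p x) (p z) < δ := by
      refine ((dist_pi_le_iff (by positivity)).mpr fun j ↦ ?_).trans_lt hmδ
      rw [Real.dist_eq, abs_sub_le_iff, sub_le_iff_le_add', sub_le_iff_le_add']
      exact ⟨hp_le (hxz j).1, hp_le (hxz j).2⟩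
    have hfdist : f (p z) i - f (p x) i < ε / 2 :=
      (le_abs_self _).trans_lt <| (dist_le_pi_dist _ _ i).trans_lt <|
        hfδ _ (hp z hz) _ (hp x hx) (dist_comm (p x) (p z) ▸ hdist)
    have hxi : p x i ≤ p z i + Fintype.card I / m := hp_le (hxz i).1
    linarith

theorem exists_nonpos_of_forall_pos_exists_le {Y : Type*} [TopologicalSpace Y] {K : Set Y}
    (hK : IsCompact K) {φ : Y → ℝ} (hφ : ContinuousOn φ K)
    (h : ∀ ε > 0, ∃ x ∈ K, φ x ≤ ε) : ∃ x ∈ K, φ x ≤ 0 := by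
  obtain ⟨x₁, hx₁, -⟩ := h 1 one_pos
  obtain ⟨x, hx, hmin⟩ := hK.exists_isMinOn ⟨x₁, hx₁⟩ hφ
  refine ⟨x, hx, le_of_forall_pos_le_add fun ε hε ↦ ?_⟩
  obtain ⟨y, hy, hyε⟩ := h ε hε
  simpa using (hmin hy).trans hyε

theorem brouwer_fixed_point_stdSimplex [Nonempty I] {f : (I → ℝ) → I → ℝ}
    (hf : ContinuousOn f (stdSimplex ℝ I))
    (hmaps : Set.MapsTo f (stdSimplex ℝ I) (stdSimplex ℝ I)) : ∃ x ∈ stdSimplex ℝ I, f x = x := by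
  let φ (x : I → ℝ) : ℝ := Finset.univ.sup' Finset.univ_nonempty fun i ↦ x i - f x i
  have hφ : ContinuousOn φ (stdSimplex ℝ I) := ContinuousOn.finset_sup'_apply _ fun i _ ↦
    (continuous_apply i).continuousOn.sub ((continuous_apply i).comp_continuousOn hf)
  obtain ⟨x, hx, hxφ⟩ := exists_nonpos_of_forall_pos_exists_le (isCompact_stdSimplex ℝ I) hφ
    fun ε hε ↦ by simpa [φ] using exists_mem_stdSimplex_forall_sub_le hf hmaps hε
  have hle (i : I) : x i ≤ f x i := by
    simpa using (Finset.sup'_le_iff _ _).mp hxφ i (Finset.mem_univ i)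
  have heq := (Finset.sum_eq_sum_iff_of_le fun i _ ↦ hle i).mp (hx.2.trans (hmaps hx).2.symm)
  exact ⟨x, hx, funext fun i ↦ (heq i (Finset.mem_univ i)).symm⟩

end Brouwer

section Schauder

open Filter Topology

variable {X : Type*} [NormedAddCommGroup X] [NormedSpace ℝ X] {K A : Set X} {F : X → X}

theorem exists_schauder_projection (hA : IsCompact A) {ε : ℝ} (hε : 0 < ε) :
    ∃ (t : Finset X) (p : X → t → ℝ), ↑t ⊆ A ∧ Continuous p ∧ Set.MapsTo p A (stdSimplex ℝ t) ∧
      ∀ x ∈ A, dist (∑ i, p x i • (i : X)) x < ε := by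
  obtain ⟨t, htA, hAt⟩ := hA.elim_nhds_subcover (fun x ↦ Metric.ball x ε) fun x _ ↦
    Metric.ball_mem_nhds x hε
  obtain ⟨f, hf⟩ := PartitionOfUnity.exists_isSubordinate hA.isClosed
    (fun i : t ↦ Metric.ball (i : X) ε) (fun _ ↦ Metric.isOpen_ball)
    (hAt.trans_eq (Set.biUnion_eq_iUnion _ _))
  refine ⟨t, fun x i ↦ f i x, htA, continuous_pi fun i ↦ (f i).continuous,
    fun x hx ↦ ⟨fun i ↦ f.nonneg i x, ?_⟩, fun x hx ↦ ?_⟩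
  · rw [← finsum_eq_sum_of_fintype, f.sum_eq_one hx]
  · rw [← finsum_eq_sum_of_fintype]
    refine f.finsum_smul_mem_convex (g := fun i _ ↦ (i : X)) hx (fun i hi ↦ ?_)
      (convex_ball x ε)
    exact Metric.mem_ball_comm.mp (hf i (subset_tsupport _ hi))

theorem exists_dist_lt_of_mapsTo_isCompact (hK : Convex ℝ K) (hKne : K.Nonempty) (hA : IsCompact A)
    (hAK : A ⊆ K) (hF : ContinuousOn F K) (hmaps : Set.MapsTo F K A) {ε : ℝ} (hε : 0 < ε) :
    ∃ x ∈ K, dist x (F x) < ε := by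
  obtain ⟨t, p, htA, hp, hpA, hpε⟩ := exists_schauder_projection hA hε
  let g (s : t → ℝ) : X := ∑ i, s i • (i : X)
  have hg : Continuous g := by fun_prop
  have hgK : Set.MapsTo g (stdSimplex ℝ t) K := fun s hs ↦
    hK.sum_mem (fun i _ ↦ hs.1 i) hs.2 fun i _ ↦ hAK (htA i.2)
  have : Nonempty t := by
    obtain ⟨x, hx⟩ := hKne
    by_contra hempty
    rw [not_nonempty_iff] at hempty
    simpa using (hpA (hmaps hx)).2
  obtain ⟨s, hs, hfix⟩ := brouwer_fixed_point_stdSimplex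
    (hp.comp_continuousOn (hF.comp hg.continuousOn hgK)) (hpA.comp (hmaps.comp hgK))
  refine ⟨g s, hgK hs, ?_⟩
  calc dist (g s) (F (g s)) = dist (∑ i, p (F (g s)) i • (i : X)) (F (g s)) := by
        rw [show p (F (g s)) = s from hfix]
    _ < ε := hpε _ (hmaps (hgK hs))

theorem schauder_fixed_point (hK : Convex ℝ K) (hKne : K.Nonempty) (hA : IsCompact A)
    (hAK : A ⊆ K) (hF : ContinuousOn F K) (hmaps : Set.MapsTo F K A) : ∃ x ∈ K, F x = x := by
  choose x hxK hx using fun n : ℕ ↦ exists_dist_lt_of_mapsTo_isCompact hK hKne hA hAK hF hmaps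
    (Nat.one_div_pos_of_nat (α := ℝ) (n := n))
  obtain ⟨a, haA, φ, hφ, hFa⟩ := hA.tendsto_subseq fun n ↦ hmaps (hxK n)
  have hdist : Tendsto (fun n ↦ dist (x (φ n)) (F (x (φ n)))) atTop (𝓝 0) :=
    (squeeze_zero (fun _ ↦ dist_nonneg) (fun n ↦ (hx n).le)
      tendsto_one_div_add_atTop_nhds_zero_nat).comp hφ.tendsto_atTop
  have hxa : Tendsto (x ∘ φ) atTop (𝓝[K] a) :=
    tendsto_nhdsWithin_iff.mpr ⟨(tendsto_iff_of_dist hdist).mpr hFa, .of_forall fun n ↦ hxK (φ n)⟩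
  exact ⟨a, hAK haA, tendsto_nhds_unique ((hF a (hAK haA)).tendsto.comp hxa) hFa⟩

end Schauder

section Monch

open TopologicalSpace

section Algebraic

variable {X : Type*} [AddCommGroup X] [Module ℝ X]

/-- One step of Mönch's iteration, the convex hull of `u₀` and the image of `A`. -/
def monchStep (F : X → X) (u₀ : X) (A : Set X) : Set X :=
  convexHull ℝ ({u₀} ∪ F '' A)

/-- Mönch's invariant set, the least fixed point of `monchStep`: the smallest convex set that
contains `u₀` and is mapped to itself by `F`. It is encoded as the union of the iterates because
this exhibits it as separable. -/
def monchHull (F : X → X) (u₀ : X) : Set X :=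
  ⋃ n, (monchStep F u₀)^[n] ∅

theorem monchStep_mono (F : X → X) (u₀ : X) : Monotone (monchStep F u₀) := fun _ _ h ↦
  convexHull_mono (Set.union_subset_union_right _ (Set.image_mono h))

theorem monchStep_iterate_subset_monchHull (F : X → X) (u₀ : X) (n : ℕ) :
    (monchStep F u₀)^[n] ∅ ⊆ monchHull F u₀ :=
  Set.subset_iUnion (fun n ↦ (monchStep F u₀)^[n] ∅) n

theorem monchHull_subset {F : X → X} {u₀ : X} {A : Set X} (hA : monchStep F u₀ A ⊆ A) :
    monchHull F u₀ ⊆ A := by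
  refine Set.iUnion_subset fun n ↦ ?_
  induction n with
  | zero => exact Set.empty_subset A
  | succ n ih =>
    rw [Function.iterate_succ_apply']
    exact (monchStep_mono F u₀ ih).trans hA

theorem convex_monchHull (F : X → X) (u₀ : X) : Convex ℝ (monchHull F u₀) := by
  refine (((monchStep_mono F u₀).monotone_iterate_of_le_map
    (Set.empty_subset _)).directed_le).convex_iUnion fun n ↦ ?_
  cases n with
  | zero => exact convex_empty
  | succ n =>
    rw [Function.iterate_succ_apply']
    exact convex_convexHull ℝ _

theorem monchStep_monchHull (F : X → X) (u₀ : X) :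
    monchStep F u₀ (monchHull F u₀) = monchHull F u₀ := by
  have hstep (n : ℕ) : {u₀} ∪ F '' (monchStep F u₀)^[n] ∅ ⊆ monchHull F u₀ :=
    (subset_convexHull ℝ _).trans <|
      (Function.iterate_succ_apply' (monchStep F u₀) n ∅).ge.trans
        (monchStep_iterate_subset_monchHull F u₀ (n + 1))
  have hle : monchStep F u₀ (monchHull F u₀) ⊆ monchHull F u₀ := by
    refine convexHull_min (Set.union_subset (Set.subset_union_left.trans (hstep 0)) ?_)
      (convex_monchHull F u₀)
    rw [monchHull, Set.image_iUnion]
    exact Set.iUnion_subset fun n ↦ Set.subset_union_right.trans (hstep n)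
  exact hle.antisymm (monchHull_subset (monchStep_mono F u₀ hle))

end Algebraic

variable {X : Type*} [NormedAddCommGroup X] [NormedSpace ℝ X]

theorem isSeparable_convexHull {s : Set X} (hs : IsSeparable s) : IsSeparable (convexHull ℝ s) :=
  (hs.span (R := ℝ)).mono (convexHull_min Submodule.subset_span (Submodule.convex _))

theorem convexHull_subset_closure_convexHull {s t : Set X} (h : s ⊆ closure (convexHull ℝ t)) :
    convexHull ℝ s ⊆ closure (convexHull ℝ t) :=
  convexHull_min h (convex_convexHull ℝ t).closure

variable {D : Set X} {F : X → X} {u₀ : X}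

theorem isSeparable_monchHull (hF : ContinuousOn F (monchHull F u₀)) :
    IsSeparable (monchHull F u₀) := by
  refine .iUnion fun n ↦ ?_
  induction n with
  | zero => exact Set.countable_empty.isSeparable
  | succ n ih =>
    rw [Function.iterate_succ_apply']
    exact isSeparable_convexHull <| (Set.countable_singleton u₀).isSeparable.union <|
      (hF.mono (monchStep_iterate_subset_monchHull F u₀ n)).isSeparable_image ih

theorem monch_fixed_point (hDconv : Convex ℝ D) (hDclosed : IsClosed D) (hu₀ : u₀ ∈ D)
    (hF : ContinuousOn F D) (hmaps : Set.MapsTo F D D)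
    (hcompact : ∀ C ⊆ D, C.Countable → C ⊆ closure (convexHull ℝ ({u₀} ∪ F '' C)) →
      IsCompact (closure (F '' C))) :
    ∃ x ∈ D, F x = x := by
  set M := monchHull F u₀
  have hstep : convexHull ℝ ({u₀} ∪ F '' M) = M := monchStep_monchHull F u₀
  have hMgen : {u₀} ∪ F '' M ⊆ M := (subset_convexHull ℝ _).trans hstep.le
  have hMD : M ⊆ D := monchHull_subset <| convexHull_min
    (Set.union_subset (Set.singleton_subset_iff.mpr hu₀) hmaps.image_subset) hDconv
  have hclMD : closure M ⊆ D := closure_minimal hMD hDclosed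
  obtain ⟨C, hCM, hC, hMC⟩ := (isSeparable_monchHull (hF.mono hMD)).exists_countable_dense_subset
  have hFM : F '' closure M ⊆ closure (F '' C) :=
    (Set.image_mono (closure_minimal hMC isClosed_closure)).trans
      (hF.mono ((closure_mono hCM).trans hclMD)).image_closure
  have hCsub : C ⊆ closure (convexHull ℝ ({u₀} ∪ F '' C)) := by
    refine (hCM.trans hstep.ge).trans (convexHull_subset_closure_convexHull ?_)
    refine Set.union_subset ((Set.subset_union_left.trans (subset_convexHull ℝ _)).trans
      subset_closure) (((Set.image_mono subset_closure).trans hFM).trans (closure_mono ?_))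
    exact Set.subset_union_right.trans (subset_convexHull ℝ _)
  have hAM : closure (F '' C) ⊆ closure M :=
    closure_mono ((Set.image_mono hCM).trans (Set.subset_union_right.trans hMgen))
  obtain ⟨x, hx, hfix⟩ := schauder_fixed_point (convex_monchHull F u₀).closure
    ⟨u₀, subset_closure (hMgen (.inl rfl))⟩ (hcompact C (hCM.trans hMD) hC hCsub) hAM
    (hF.mono hclMD) (Set.mapsTo_iff_image_subset.mpr hFM)
  exact ⟨x, hclMD hx, hfix⟩

end Monch

section Cutoff

open AffineMap

variable {X : Type*} [NormedAddCommGroup X] [NormedSpace ℝ X] {U S : Set X} {N : X → X} {u₀ : X}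

theorem isClosed_setOf_exists_lineMap_eq (hS : IsClosed S) (hN : ContinuousOn N S) (u₀ : X) :
    IsClosed {x ∈ S | ∃ l ∈ Set.Icc (0 : ℝ) 1, lineMap u₀ (N x) l = x} := by
  let Q : Set (unitInterval × X) := {p | p.2 ∈ S ∧ lineMap u₀ (N p.2) (p.1 : ℝ) = p.2}
  have hSsnd : IsClosed {p : unitInterval × X | p.2 ∈ S} := hS.preimage continuous_snd
  have hNsnd : ContinuousOn (fun p : unitInterval × X ↦ N p.2) {p | p.2 ∈ S} :=
    hN.comp continuous_snd.continuousOn fun _ hp ↦ hp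
  have hline : ContinuousOn (fun p : unitInterval × X ↦ lineMap u₀ (N p.2) (p.1 : ℝ))
      {p | p.2 ∈ S} :=
    continuousOn_const.lineMap hNsnd (by fun_prop)
  have hQ : IsClosed Q := hSsnd.isClosed_eq hline continuous_snd.continuousOn
  convert isClosedMap_snd_of_compactSpace _ hQ using 1
  ext x
  simp [Q]

theorem exists_cutoff (hU : IsOpen U) (hN : ContinuousOn N (closure U))
    (hfr : ∀ u ∈ frontier U, ∀ l ∈ Set.Icc (0 : ℝ) 1, lineMap u₀ (N u) l ≠ u) :
    ∃ φ : C(X, ℝ), (∀ x, φ x ∈ Set.Icc 0 1) ∧ Set.EqOn φ 0 Uᶜ ∧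
      ∀ x ∈ closure U, lineMap u₀ (N x) (φ x) = x → N x = x := by
  let S := {x ∈ closure U | ∃ l ∈ Set.Icc (0 : ℝ) 1, lineMap u₀ (N x) l = x}
  have hdisj : Disjoint Uᶜ S := by
    refine Set.disjoint_left.mpr fun x hxU ⟨hx, l, hl, hlx⟩ ↦ hfr x ?_ l hl hlx
    rw [hU.frontier_eq]
    exact ⟨hx, hxU⟩
  obtain ⟨φ, hφ0, hφ1, hφ⟩ := exists_continuous_zero_one_of_isClosed hU.isClosed_compl
    (isClosed_setOf_exists_lineMap_eq isClosed_closure hN u₀) hdisj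
  refine ⟨φ, hφ, hφ0, fun x hx hfix ↦ ?_⟩
  have hφx : φ x = 1 := hφ1 ⟨hx, φ x, hφ x, hfix⟩
  rwa [hφx, lineMap_apply_one] at hfix

theorem continuous_lineMap_of_eqOn_zero (hU : IsOpen U) (hN : ContinuousOn N (closure U))
    {φ : X → ℝ} (hφ : Continuous φ) (hφ0 : Set.EqOn φ 0 Uᶜ) :
    Continuous fun x ↦ lineMap u₀ (N x) (φ x) := by
  have hclosure : ContinuousOn (fun x ↦ lineMap u₀ (N x) (φ x)) (closure U) :=
    continuousOn_const.lineMap hN hφ.continuousOn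
  have hcompl : ContinuousOn (fun x ↦ lineMap u₀ (N x) (φ x)) Uᶜ :=
    continuousOn_const (c := u₀) |>.congr fun x hx ↦ by simp [hφ0 hx]
  rw [← continuousOn_univ, ← Set.univ_subset_iff.mp (Set.union_compl_self U ▸
    Set.union_subset_union_left Uᶜ subset_closure)]
  exact hclosure.union_of_isClosed hcompl isClosed_closure hU.isClosed_compl

theorem isCompact_closure_image_lineMap {φ : X → ℝ} (hφ : ∀ x, φ x ∈ Set.Icc 0 1)
    (hφ0 : Set.EqOn φ 0 Uᶜ) {C : Set X} (hC : IsCompact (closure (C ∩ U)))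
    (hN : ContinuousOn N (closure (C ∩ U))) :
    IsCompact (closure ((fun x ↦ lineMap u₀ (N x) (φ x)) '' C)) := by
  have hline : ContinuousOn (fun p : ℝ × X ↦ lineMap u₀ (N p.2) p.1)
      (Set.Icc 0 1 ×ˢ closure (C ∩ U)) :=
    continuousOn_const.lineMap (hN.comp continuousOn_snd fun _ hp ↦ hp.2) continuousOn_fst
  refine ((isCompact_singleton (x := u₀)).union
    ((isCompact_Icc.prod hC).image_of_continuousOn hline)).closure_of_subset ?_
  rintro _ ⟨x, hx, rfl⟩
  by_cases hxU : x ∈ U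
  · exact .inr ⟨(φ x, x), ⟨hφ x, subset_closure ⟨hx, hxU⟩⟩, rfl⟩
  · exact .inl (by simp [hφ0 hxU])

theorem image_lineMap_subset_convexHull {φ : X → ℝ} (hφ : ∀ x, φ x ∈ Set.Icc 0 1)
    (hφ0 : Set.EqOn φ 0 Uᶜ) (C : Set X) :
    {u₀} ∪ (fun x ↦ lineMap u₀ (N x) (φ x)) '' C ⊆ convexHull ℝ ({u₀} ∪ N '' (C ∩ U)) := by
  have hu₀ : u₀ ∈ convexHull ℝ ({u₀} ∪ N '' (C ∩ U)) := subset_convexHull ℝ _ (.inl rfl)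
  rintro _ (rfl | ⟨x, hx, rfl⟩)
  · exact hu₀
  by_cases hxU : x ∈ U
  · exact (convex_convexHull ℝ _).lineMap_mem hu₀
      (subset_convexHull ℝ _ (.inr ⟨x, ⟨hx, hxU⟩, rfl⟩)) (hφ x)
  · simpa [hφ0 hxU] using hu₀

theorem lineMap_ne_of_forall_ne_smul {a b u : X} (hau : a ≠ u) (hbu : b ≠ u)
    (h : ∀ lam : ℝ, 1 < lam → b - a ≠ lam • (u - a)) {l : ℝ} (hl : l ∈ Set.Icc 0 1) :
    lineMap a b l ≠ u := by
  rintro rfl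
  obtain ⟨hl0, hl1⟩ : 0 < l ∧ l < 1 := by
    refine ⟨hl.1.lt_of_ne ?_, hl.2.lt_of_ne ?_⟩ <;> rintro rfl <;> simp at hau hbu
  refine h l⁻¹ ((one_lt_inv₀ hl0).mpr hl1) ?_
  rw [lineMap_apply_module', add_sub_cancel_right, inv_smul_smul₀ hl0.ne']

end Cutoff

theorem stmt_0_general {X : Type*} [NormedAddCommGroup X] [NormedSpace ℝ X]
    (U : Set X) (hU : IsOpen U)
    (N : X → X) (hNcont : ContinuousOn N (closure U))
    (u₀ : X) (hu₀ : u₀ ∈ U)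
    (ha : ∀ u ∈ frontier U, ∀ lam : ℝ, 1 < lam → N u - u₀ ≠ lam • (u - u₀))
    (hb : ∀ C : Set X, C ⊆ closure U → C.Countable →
      C ⊆ closure (convexHull ℝ ({u₀} ∪ N '' C)) → IsCompact (closure C)) :
    ∃ u ∈ closure U, N u = u := by
  by_contra! hN
  have hfr (u : X) (hu : u ∈ frontier U) (l : ℝ) (hl : l ∈ Set.Icc 0 1) :
      AffineMap.lineMap u₀ (N u) l ≠ u := by
    have hu₀u : u₀ ≠ u := by
      rintro rfl
      exact (hU.frontier_eq ▸ hu).2 hu₀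
    exact lineMap_ne_of_forall_ne_smul hu₀u (hN u (frontier_subset_closure hu)) (ha u hu) hl
  obtain ⟨φ, hφ, hφ0, hφfix⟩ := exists_cutoff hU hNcont hfr
  obtain ⟨x, -, hx⟩ := monch_fixed_point convex_univ isClosed_univ (Set.mem_univ u₀)
    (continuous_lineMap_of_eqOn_zero (u₀ := u₀) hU hNcont φ.continuous hφ0).continuousOn
    (Set.mapsTo_univ _ _) fun C _ hC hCsub ↦ by
      have hCU : C ∩ U ⊆ closure U := Set.inter_subset_right.trans subset_closure
      refine isCompact_closure_image_lineMap hφ hφ0 (hb _ hCU (hC.mono Set.inter_subset_left) ?_)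
        (hNcont.mono (closure_minimal hCU isClosed_closure))
      exact Set.inter_subset_left.trans <| hCsub.trans <| closure_mono <|
        convexHull_min (image_lineMap_subset_convexHull hφ hφ0 C) (convex_convexHull ℝ _)
  by_cases hxU : x ∈ U
  · exact hN x (subset_closure hxU) (hφfix x (subset_closure hxU) hx)
  · exact hxU ((by simpa [hφ0 hxU] using hx : u₀ = x) ▸ hu₀)

/-- **Mönch's continuation theorem.**  Let `X` be a real Banach space, `U` an open subset
of `X`, and `N : cl U → X` continuous (modelled as a map `N : X → X` continuous on the
closure of `U`).  If for some `u₀ ∈ U`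
(a) `N u - u₀ ≠ λ • (u - u₀)` for every `u` in the boundary of `U` and every real `λ > 1`, and
(b) every countable `C ⊆ cl U` with `C ⊆ closure (convexHull ({u₀} ∪ N '' C))` has compact
closure, then `N` has a fixed point in `cl U`. -/
theorem stmt_0
    {X : Type*} [NormedAddCommGroup X] [NormedSpace ℝ X] [CompleteSpace X]
    (U : Set X) (hU : IsOpen U)
    (N : X → X) (hNcont : ContinuousOn N (closure U))
    (u₀ : X) (hu₀ : u₀ ∈ U)
    (ha : ∀ u ∈ frontier U, ∀ lam : ℝ, 1 < lam → N u - u₀ ≠ lam • (u - u₀))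
    (hb : ∀ C : Set X, C ⊆ closure U → C.Countable →
      C ⊆ closure (convexHull ℝ ({u₀} ∪ N '' C)) → IsCompact (closure C)) :
    ∃ u ∈ closure U, N u = u := by
  exact stmt_0_general U hU N hNcont u₀ hu₀ ha hb
end

section
/- Bihari-type comparison (key step in the proof of Lemma 2.2): Let a > 0, M > 0, λ ∈ (0,1), r ≥ 0, let R : [0,a] → ℝ be continuous with R(t) > 0 for all t and r < min_{t∈[0,a]} R(t), let δ ∈ L¹(0,a) be nonnegative, and let ψ : [0,∞) → [0,∞) be continuous, nondecreasing, with ψ(s) > 0 for s > 0. Assume ∫_r^{R(t)} dτ/ψ(τ) ≥ M·∫₀ᵗ δ(s) ds for all t ∈ [0,a]. Let w : [0,a] → ℝ be measurable with δ·w integrable, and define c(t) = λ·r + λ·M·∫₀ᵗ δ(s)w(s) ds. If 0 ≤ w(s) ≤ ψ(c(s)) for a.e. s ∈ [0,a], then c(t) < R(t) for every t ∈ [0,a]. -/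
open MeasureTheory

/-!
If `μ (a, x] = c x - c a` for a continuous nondecreasing `c`, then `c` pushes `μ` forward to
Lebesgue measure on `(c a, c b]`. Taking `μ` with density `h = c'` gives the substitution `τ = c s`,
so that `c' ≤ k · ψ(c)` on `(a, b]` implies `∫_{c a}^{c b} dτ/ψ(τ) ≤ ∫_a^b k`.

Let `k = λMδ` and suppose `R t ≤ c t`. As `c 0 = λr ≤ r`, the values of `c` cover `(r, R t]`, hence
`∫_r^{R t} dτ/ψ(τ) ≤ λM ∫₀ᵗ δ ≤ λ ∫_r^{R t} dτ/ψ(τ)`. The integral is finite by the first inequality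
and positive because `ψ` is, which contradicts `λ < 1`.
-/

open Set

theorem ofReal_integral_le_lintegral_ofReal {α : Type*} [MeasurableSpace α] {μ : Measure α}
    (f : α → ℝ) : ENNReal.ofReal (∫ x, f x ∂μ) ≤ ∫⁻ x, ENNReal.ofReal (f x) ∂μ := by
  by_cases hf : Integrable f μ
  · rw [integral_eq_lintegral_pos_part_sub_lintegral_neg_part hf]
    exact (ENNReal.ofReal_le_ofReal (sub_le_self _ ENNReal.toReal_nonneg)).trans
      ENNReal.ofReal_toReal_le
  · simp only [integral_undef hf, ENNReal.ofReal_zero, zero_le]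

theorem ofReal_intervalIntegral_le_setLIntegral_ofReal {f : ℝ → ℝ} {x y : ℝ} (hxy : x ≤ y) :
    ENNReal.ofReal (∫ s in x..y, f s) ≤ ∫⁻ s in Ioc x y, ENNReal.ofReal (f s) := by
  rw [intervalIntegral.integral_of_le hxy]
  exact ofReal_integral_le_lintegral_ofReal f

theorem lintegral_pos_of_ae_pos {α : Type*} [MeasurableSpace α] {μ : Measure α} (hμ : μ ≠ 0)
    {f : α → ENNReal} (hf : AEMeasurable f μ) (hpos : ∀ᵐ x ∂μ, 0 < f x) : 0 < ∫⁻ x, f x ∂μ := by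
  simpa only [lintegral_zero] using
    lintegral_strict_mono hμ hf (lintegral_zero.trans_ne ENNReal.zero_ne_top) hpos

section Pushforward

variable {α : Type*} [ConditionallyCompleteLinearOrder α] [TopologicalSpace α] [OrderTopology α]
  [DenselyOrdered α] {a b : α}

theorem exists_Ioc_inter_preimage_Iic_eq {β : Type*} [LinearOrder β] [TopologicalSpace β]
    [OrderClosedTopology β] {c : α → β} (hab : a ≤ b) (hcont : ContinuousOn c (Icc a b))
    (hmono : MonotoneOn c (Icc a b)) {v : β} (hv : v ∈ Icc (c a) (c b)) :
    ∃ x ∈ Icc a b, c x = v ∧ Ioc a b ∩ c ⁻¹' Iic v = Ioc a x := by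
  have hcompact : IsCompact (Icc a b ∩ c ⁻¹' Iic v) :=
    isCompact_Icc.of_isClosed_subset
      (hcont.preimage_isClosed_of_isClosed isClosed_Icc isClosed_Iic) inter_subset_left
  obtain ⟨x, ⟨hx, hxv⟩, hgreatest⟩ :=
    hcompact.exists_isGreatest ⟨a, left_mem_Icc.2 hab, hv.1⟩
  obtain ⟨y, hy, hyv⟩ := intermediate_value_Icc hab hcont hv
  have hyx : y ≤ x := hgreatest ⟨hy, hyv.le⟩
  refine ⟨x, hx, le_antisymm hxv (hyv ▸ hmono hy hx hyx), Subset.antisymm ?_ ?_⟩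
  · exact fun z hz => ⟨hz.1.1, hgreatest ⟨Ioc_subset_Icc_self hz.1, hz.2⟩⟩
  · intro z hz
    have hzb : z ≤ b := hz.2.trans hx.2
    exact ⟨⟨hz.1, hzb⟩, (hmono ⟨hz.1.le, hzb⟩ hx hz.2).trans hxv⟩

theorem map_restrict_Ioc_eq_volume_restrict [MeasurableSpace α] [OpensMeasurableSpace α]
    {μ : Measure α} {c : α → ℝ} (hab : a ≤ b) (hcont : ContinuousOn c (Icc a b))
    (hmono : MonotoneOn c (Icc a b))
    (hμ : ∀ x ∈ Icc a b, μ (Ioc a x) = ENNReal.ofReal (c x - c a)) :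
    (μ.restrict (Ioc a b)).map c = volume.restrict (Ioc (c a) (c b)) := by
  have hc : AEMeasurable c (μ.restrict (Ioc a b)) :=
    (hcont.mono Ioc_subset_Icc_self).aemeasurable measurableSet_Ioc
  refine (Measure.ext_of_Iic _ _ fun v => ?_).symm
  rw [Measure.map_apply_of_aemeasurable hc measurableSet_Iic,
    Measure.restrict_apply' measurableSet_Ioc, Measure.restrict_apply' measurableSet_Ioc,
    inter_comm, inter_comm _ (Ioc a b), Ioc_inter_Iic]
  rcases lt_or_ge v (c a) with hva | hva
  · have hempty : Ioc a b ∩ c ⁻¹' Iic v = ∅ := by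
      refine eq_empty_of_forall_notMem fun x hx => (hva.trans_le ?_).not_ge hx.2
      exact hmono (left_mem_Icc.2 hab) (Ioc_subset_Icc_self hx.1) hx.1.1.le
    rw [hempty, measure_empty, Ioc_eq_empty (not_lt.2 (inf_le_of_right_le hva.le)), measure_empty]
  · have hcab : c a ≤ c b := hmono (left_mem_Icc.2 hab) (right_mem_Icc.2 hab) hab
    obtain ⟨x, hx, hcx, hpreimage⟩ := exists_Ioc_inter_preimage_Iic_eq hab hcont hmono
      (v := c b ⊓ v) ⟨le_inf hcab hva, inf_le_left⟩
    have hcapped : Ioc a b ∩ c ⁻¹' Iic v = Ioc a b ∩ c ⁻¹' Iic (c b ⊓ v) := by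
      ext y
      simp only [mem_inter_iff, mem_preimage, mem_Iic, le_inf_iff]
      exact ⟨fun hy => ⟨hy.1, hmono (Ioc_subset_Icc_self hy.1) (right_mem_Icc.2 hab) hy.1.2, hy.2⟩,
        fun hy => ⟨hy.1, hy.2.2⟩⟩
    rw [hcapped, hpreimage, hμ x hx, hcx, Real.volume_Ioc]

end Pushforward

section Primitive

variable {a b : ℝ} {c h : ℝ → ℝ}

theorem continuousOn_of_eq_primitive (hab : a ≤ b) (hint : IntervalIntegrable h volume a b)
    (hc : ∀ x ∈ Icc a b, c x = c a + ∫ s in a..x, h s) : ContinuousOn c (Icc a b) := by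
  have hprim := intervalIntegral.continuousOn_primitive_interval' hint left_mem_uIcc
  rw [uIcc_of_le hab] at hprim
  exact (continuousOn_const.add hprim).congr hc

theorem withDensity_Ioc_of_eq_primitive (hint : IntervalIntegrable h volume a b)
    (hnonneg : ∀ᵐ s ∂volume.restrict (Ioc a b), 0 ≤ h s)
    (hc : ∀ x ∈ Icc a b, c x = c a + ∫ s in a..x, h s) {x : ℝ} (hx : x ∈ Icc a b) :
    volume.withDensity (fun s => ENNReal.ofReal (h s)) (Ioc a x) =
      ENNReal.ofReal (c x - c a) := by
  have hsub : Ioc a x ⊆ Ioc a b := Ioc_subset_Ioc_right hx.2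
  rw [withDensity_apply _ measurableSet_Ioc, hc x hx, add_sub_cancel_left,
    intervalIntegral.integral_of_le hx.1, ofReal_integral_eq_lintegral_ofReal
      (hint.1.mono_set hsub) (ae_restrict_of_ae_restrict_of_subset hsub hnonneg)]

theorem monotoneOn_of_eq_primitive (hint : IntervalIntegrable h volume a b)
    (hnonneg : ∀ᵐ s ∂volume.restrict (Ioc a b), 0 ≤ h s)
    (hc : ∀ x ∈ Icc a b, c x = c a + ∫ s in a..x, h s) : MonotoneOn c (Icc a b) := by
  intro x hx y hy hxy
  rw [hc x hx, hc y hy]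
  have hsub : Ioc a y ⊆ Ioc a b := Ioc_subset_Ioc_right hy.2
  gcongr
  exact intervalIntegral.integral_mono_interval le_rfl hx.1 hxy
    (ae_restrict_of_ae_restrict_of_subset hsub hnonneg)
    ((intervalIntegrable_iff_integrableOn_Ioc_of_le hy.1).2 (hint.1.mono_set hsub))

theorem setLIntegral_Ioc_le_of_eq_primitive (hab : a ≤ b) (hint : IntervalIntegrable h volume a b)
    (hnonneg : ∀ᵐ s ∂volume.restrict (Ioc a b), 0 ≤ h s)
    (hc : ∀ x ∈ Icc a b, c x = c a + ∫ s in a..x, h s) (g : ℝ → ENNReal) :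
    ∫⁻ τ in Ioc (c a) (c b), g τ ≤ ∫⁻ s in Ioc a b, ENNReal.ofReal (h s) * g (c s) := by
  have hmap := map_restrict_Ioc_eq_volume_restrict hab (continuousOn_of_eq_primitive hab hint hc)
    (monotoneOn_of_eq_primitive hint hnonneg hc)
    fun x hx => withDensity_Ioc_of_eq_primitive hint hnonneg hc hx
  calc ∫⁻ τ in Ioc (c a) (c b), g τ
      ≤ ∫⁻ s in Ioc a b, g (c s) ∂volume.withDensity fun s => ENNReal.ofReal (h s) := by
        rw [← hmap]
        exact lintegral_map_le g c
    _ = ∫⁻ s in Ioc a b, ENNReal.ofReal (h s) * g (c s) := by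
        rw [restrict_withDensity measurableSet_Ioc]
        exact lintegral_withDensity_eq_lintegral_mul_non_measurable₀ _
          hint.1.aemeasurable.ennreal_ofReal (.of_forall fun _ => ENNReal.ofReal_lt_top) _

theorem setLIntegral_inv_le_of_eq_primitive_of_le_mul {k ψ : ℝ → ℝ} (hab : a ≤ b)
    (hint : IntervalIntegrable h volume a b)
    (hc : ∀ x ∈ Icc a b, c x = c a + ∫ s in a..x, h s)
    (hle : ∀ᵐ s ∂volume.restrict (Ioc a b), 0 ≤ h s ∧ h s ≤ k s * ψ (c s)) :
    ∫⁻ τ in Ioc (c a) (c b), ENNReal.ofReal (ψ τ)⁻¹ ≤ ∫⁻ s in Ioc a b, ENNReal.ofReal (k s) := by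
  refine (setLIntegral_Ioc_le_of_eq_primitive hab hint (hle.mono fun _ hs => hs.1) hc _).trans
    (lintegral_mono_ae (hle.mono fun s ⟨hs0, hs⟩ => ?_))
  rcases le_or_gt (ψ (c s)) 0 with hψ | hψ
  · rw [ENNReal.ofReal_of_nonpos (inv_nonpos.2 hψ), mul_zero]
    exact zero_le
  · rw [← ENNReal.ofReal_mul hs0, ← div_eq_mul_inv]
    exact ENNReal.ofReal_le_ofReal ((div_le_iff₀ hψ).2 hs)

theorem setLIntegral_inv_le_of_eq_primitive_mul {K : ℝ} {δ w ψ : ℝ → ℝ} (hab : a ≤ b) (hK : 0 ≤ K)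
    (hδint : IntegrableOn δ (Ioc a b)) (hδ0 : ∀ᵐ s ∂volume.restrict (Ioc a b), 0 ≤ δ s)
    (hwint : IntegrableOn (fun s => δ s * w s) (Ioc a b))
    (hc : ∀ x ∈ Icc a b, c x = c a + K * ∫ s in a..x, δ s * w s)
    (hw : ∀ᵐ s ∂volume.restrict (Ioc a b), 0 ≤ w s ∧ w s ≤ ψ (c s)) :
    ∫⁻ τ in Ioc (c a) (c b), ENNReal.ofReal (ψ τ)⁻¹ ≤ ENNReal.ofReal (K * ∫ s in a..b, δ s) := by
  have hint : IntervalIntegrable (fun s => K * (δ s * w s)) volume a b :=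
    ((intervalIntegrable_iff_integrableOn_Ioc_of_le hab).2 hwint).const_mul K
  have hprim : ∀ x ∈ Icc a b, c x = c a + ∫ s in a..x, K * (δ s * w s) := fun x hx => by
    rw [hc x hx, intervalIntegral.integral_const_mul]
  have hle : ∀ᵐ s ∂volume.restrict (Ioc a b),
      0 ≤ K * (δ s * w s) ∧ K * (δ s * w s) ≤ K * δ s * ψ (c s) := by
    filter_upwards [hδ0, hw] with s hδs ⟨hws0, hws⟩
    refine ⟨by positivity, ?_⟩
    rw [mul_assoc K]
    gcongr
  calc ∫⁻ τ in Ioc (c a) (c b), ENNReal.ofReal (ψ τ)⁻¹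
      ≤ ∫⁻ s in Ioc a b, ENNReal.ofReal (K * δ s) :=
        setLIntegral_inv_le_of_eq_primitive_of_le_mul hab hint hprim hle
    _ = ENNReal.ofReal (∫ s in Ioc a b, K * δ s) :=
        (ofReal_integral_eq_lintegral_ofReal (hδint.const_mul K)
          (hδ0.mono fun _ hs => mul_nonneg hK hs)).symm
    _ = ENNReal.ofReal (K * ∫ s in a..b, δ s) := by
        rw [integral_const_mul, intervalIntegral.integral_of_le hab]

end Primitive

theorem setLIntegral_Ioc_inv_pos {r ρ : ℝ} (hr : 0 ≤ r) (hrρ : r < ρ) {ψ : ℝ → ℝ}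
    (hψmeas : AEMeasurable ψ (volume.restrict (Ioi 0))) (hψpos : ∀ s : ℝ, 0 < s → 0 < ψ s) :
    0 < ∫⁻ τ in Ioc r ρ, ENNReal.ofReal (ψ τ)⁻¹ := by
  have hsub : Ioc r ρ ⊆ Ioi 0 := fun τ hτ => hr.trans_lt hτ.1
  refine lintegral_pos_of_ae_pos ?_ (hψmeas.mono_set hsub).inv.ennreal_ofReal ?_
  · rw [Ne, Measure.restrict_eq_zero, Real.volume_Ioc, ENNReal.ofReal_eq_zero, sub_nonpos]
    exact hrρ.not_ge
  · filter_upwards [ae_restrict_mem measurableSet_Ioc] with τ hτ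
    exact ENNReal.ofReal_pos.2 (inv_pos.2 (hψpos τ (hsub hτ)))

/-- The integral of `1/ψ` is `ℝ≥0∞`-valued, so that divergence at `r` counts as `∞`
and not as the junk value `0`. -/
theorem stmt_10_general
    {a M lam r : ℝ} (hM : 0 ≤ M) (hlam0 : 0 ≤ lam) (hlam1 : lam < 1) (hr : 0 ≤ r)
    {R : ℝ → ℝ} (hrR : ∀ t ∈ Icc 0 a, r < R t)
    {δ : ℝ → ℝ} (hδint : IntegrableOn δ (Icc 0 a))
    (hδ0 : ∀ᵐ s ∂volume.restrict (Icc 0 a), 0 ≤ δ s)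
    {ψ : ℝ → ℝ} (hψmeas : AEMeasurable ψ (volume.restrict (Ioi 0)))
    (hψpos : ∀ s : ℝ, 0 < s → 0 < ψ s)
    (hBihari : ∀ t ∈ Icc 0 a, ENNReal.ofReal (M * ∫ s in (0 : ℝ)..t, δ s) ≤
      ∫⁻ τ in Ioc r (R t), ENNReal.ofReal (ψ τ)⁻¹)
    {w : ℝ → ℝ} (hwint : IntegrableOn (fun s => δ s * w s) (Icc 0 a))
    {c : ℝ → ℝ} (hc : ∀ t ∈ Icc 0 a, c t = lam * r + lam * M * ∫ s in (0 : ℝ)..t, δ s * w s)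
    (hw : ∀ᵐ s ∂volume.restrict (Icc 0 a), 0 ≤ w s ∧ w s ≤ ψ (c s)) :
    ∀ t ∈ Icc 0 a, c t < R t := by
  intro t ht
  by_contra! hge
  have hsub : Ioc 0 t ⊆ Icc 0 a := Ioc_subset_Icc_self.trans (Icc_subset_Icc_right ht.2)
  have hc0 : c 0 = lam * r := by
    rw [hc 0 ⟨le_rfl, ht.1.trans ht.2⟩, intervalIntegral.integral_same, mul_zero, add_zero]
  set J := ∫⁻ τ in Ioc r (R t), ENNReal.ofReal (ψ τ)⁻¹
  have hcover : Ioc r (R t) ⊆ Ioc (c 0) (c t) :=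
    Ioc_subset_Ioc (hc0.trans_le (mul_le_of_le_one_left hr hlam1.le)) hge
  have hbound : J ≤ ENNReal.ofReal (lam * M * ∫ s in (0 : ℝ)..t, δ s) :=
    (lintegral_mono_set hcover).trans <| setLIntegral_inv_le_of_eq_primitive_mul ht.1
      (mul_nonneg hlam0 hM) (hδint.mono_set hsub)
      (ae_restrict_of_ae_restrict_of_subset hsub hδ0) (hwint.mono_set hsub)
      (fun x hx => hc0 ▸ hc x ⟨hx.1, hx.2.trans ht.2⟩)
      (ae_restrict_of_ae_restrict_of_subset hsub hw)
  have hfinite : J ≠ ⊤ := ne_top_of_le_ne_top ENNReal.ofReal_ne_top hbound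
  have hpos : J ≠ 0 := (setLIntegral_Ioc_inv_pos hr (hrR t ht) hψmeas hψpos).ne'
  refine lt_irrefl J ?_
  calc J ≤ ENNReal.ofReal (lam * M * ∫ s in (0 : ℝ)..t, δ s) := hbound
    _ = ENNReal.ofReal lam * ENNReal.ofReal (M * ∫ s in (0 : ℝ)..t, δ s) := by
        rw [mul_assoc, ENNReal.ofReal_mul hlam0]
    _ ≤ ENNReal.ofReal lam * J := by gcongr; exact hBihari t ht
    _ < 1 * J := ENNReal.mul_lt_mul_left hpos hfinite (ENNReal.ofReal_lt_one.2 hlam1)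
    _ = J := one_mul J

/-- **Bihari-type comparison (key step in the proof of Lemma 2.2).** If
`∫_r^{R(t)} dτ/ψ(τ) ≥ M·∫₀ᵗ δ(s) ds` on `[0,a]`, `c(t) = λr + λM·∫₀ᵗ δ(s)w(s) ds` with
`λ ∈ (0,1)` and `0 ≤ w(s) ≤ ψ(c(s))` a.e., then `c(t) < R(t)` on `[0,a]`. -/
theorem stmt_10
    {a M lam r : ℝ} (ha : 0 < a) (hM : 0 < M) (hlam0 : 0 < lam) (hlam1 : lam < 1)
    (hr : 0 ≤ r)
    (R : ℝ → ℝ) (hRc : ContinuousOn R (Set.Icc 0 a))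
    (hRpos : ∀ t ∈ Set.Icc (0:ℝ) a, 0 < R t)
    (hrR : ∀ t ∈ Set.Icc (0:ℝ) a, r < R t)
    (δ : ℝ → ℝ) (hδint : IntegrableOn δ (Set.Icc 0 a)) (hδ0 : ∀ t, 0 ≤ δ t)
    (ψ : ℝ → ℝ) (hψc : ContinuousOn ψ (Set.Ici 0)) (hψm : MonotoneOn ψ (Set.Ici 0))
    (hψ0 : ∀ s : ℝ, 0 ≤ s → 0 ≤ ψ s) (hψpos : ∀ s : ℝ, 0 < s → 0 < ψ s)
    (hBihari : ∀ t ∈ Set.Icc (0:ℝ) a,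
      M * (∫ s in (0:ℝ)..t, δ s) ≤ ∫ τ in r..(R t), (ψ τ)⁻¹)
    (w : ℝ → ℝ) (hwmeas : Measurable w)
    (hwint : IntegrableOn (fun s => δ s * w s) (Set.Icc 0 a))
    (c : ℝ → ℝ) (hc : ∀ t, c t = lam * r + lam * M * ∫ s in (0:ℝ)..t, δ s * w s)
    (hw : ∀ᵐ s ∂(volume.restrict (Set.Icc 0 a)), 0 ≤ w s ∧ w s ≤ ψ (c s)) :
    ∀ t ∈ Set.Icc (0:ℝ) a, c t < R t := by
  have hψmeas : AEMeasurable ψ (volume.restrict (Ioi 0)) :=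
    (hψc.mono Ioi_subset_Ici_self).aemeasurable measurableSet_Ioi
  exact stmt_10_general hM.le hlam0.le hlam1 hr hrR hδint (.of_forall hδ0) hψmeas hψpos
    (fun t ht => (ENNReal.ofReal_le_ofReal (hBihari t ht)).trans
      (ofReal_intervalIntegral_le_setLIntegral_ofReal (hrR t ht).le))
    hwint (fun t _ => hc t) hw
end

section
/- Vanishing lemma for a linear integral inequality (key step in the proof of Theorem 2.3): Let a > 0, b ∈ [0,a], let γ ∈ L¹(0,a) be nonnegative, and let A, B ≥ 0 be constants with (A + B)·∫₀ᵇ γ(s) ds < 1. If φ : [0,a] → ℝ is continuous, φ(t) ≥ 0 for all t, and φ(t) ≤ A·∫₀ᵇ γ(s)φ(s) ds + B·∫₀ᵗ γ(s)φ(s) ds for all t ∈ [0,a], then φ(t) = 0 for all t ∈ [0,a]. -/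
open MeasureTheory

/-!
On an interval where `φ ≤ C * ∫ γφ` and `C * ∫ γ < 1`, multiplying by `γ` and integrating gives
`∫ γφ ≤ (C * ∫ γ) * ∫ γφ`, hence `∫ γφ = 0`. Write `G` for the primitive of `γφ` that vanishes at
the left endpoint. With `C = A + B` on the interval up to `b` this contraction yields `G b = 0`,
which leaves the Volterra inequality `φ ≤ B * G`. The same contraction with `C = B`, applied just to
the right of a zero of `G`, where `B * ∫ γ` is small, shows that `G` has no last zero before the
right endpoint. As its zero set is closed, `G` vanishes identically.
-/

section LinearIntegralInequality

open Set Filter Topology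

theorem integral_mul_eq_zero_of_ae_le_const_mul_integral {α : Type*} [MeasurableSpace α]
    {μ : Measure α} {γ φ : α → ℝ} {C : ℝ}
    (hγ : Integrable γ μ) (hγφ : Integrable (fun x => γ x * φ x) μ)
    (hγ0 : 0 ≤ᵐ[μ] γ) (hφ0 : 0 ≤ᵐ[μ] φ) (hC : C * ∫ x, γ x ∂μ < 1)
    (hφ : ∀ᵐ x ∂μ, φ x ≤ C * ∫ y, γ y * φ y ∂μ) :
    ∫ x, γ x * φ x ∂μ = 0 := by
  set I := ∫ x, γ x * φ x ∂μ
  have I_nonneg : 0 ≤ I := integral_nonneg_of_ae <| by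
    filter_upwards [hγ0, hφ0] with x hγx hφx using mul_nonneg hγx hφx
  have I_le : I ≤ (C * ∫ x, γ x ∂μ) * I :=
    calc I ≤ ∫ x, γ x * (C * I) ∂μ := integral_mono_ae hγφ (hγ.mul_const _) <| by
          filter_upwards [hγ0, hφ] with x hγx hφx using mul_le_mul_of_nonneg_left hφx hγx
      _ = (C * ∫ x, γ x ∂μ) * I := by rw [integral_mul_const]; ring
  nlinarith

variable {μ : Measure ℝ} {γ φ : ℝ → ℝ} {a b : ℝ}

theorem intervalIntegral_mul_eq_zero_of_le_const_mul {C : ℝ} (hab : a ≤ b)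
    (hγ : IntegrableOn γ (Icc a b) μ) (hγφ : IntegrableOn (fun s => γ s * φ s) (Icc a b) μ)
    (hγ0 : ∀ t ∈ Icc a b, 0 ≤ γ t) (hφ0 : ∀ t ∈ Icc a b, 0 ≤ φ t)
    (hC : C * ∫ s in a..b, γ s ∂μ < 1)
    (hφ : ∀ t ∈ Icc a b, φ t ≤ C * ∫ s in a..b, γ s * φ s ∂μ) :
    ∫ s in a..b, γ s * φ s ∂μ = 0 := by
  rw [intervalIntegral.integral_of_le hab] at hC hφ ⊢
  have ae_of_forall_Icc {p : ℝ → Prop} (hp : ∀ t ∈ Icc a b, p t) :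
      ∀ᵐ t ∂μ.restrict (Ioc a b), p t :=
    ae_restrict_of_forall_mem measurableSet_Ioc fun t ht => hp t (Ioc_subset_Icc_self ht)
  exact integral_mul_eq_zero_of_ae_le_const_mul_integral (hγ.mono_set Ioc_subset_Icc_self)
    (hγφ.mono_set Ioc_subset_Icc_self) (ae_of_forall_Icc hγ0) (ae_of_forall_Icc hφ0) hC
    (ae_of_forall_Icc hφ)

theorem monotoneOn_intervalIntegral_of_nonneg {f : ℝ → ℝ} (hf : IntegrableOn f (Icc a b) μ)
    (hf0 : ∀ t ∈ Icc a b, 0 ≤ f t) : MonotoneOn (fun t => ∫ s in a..t, f s ∂μ) (Icc a b) := by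
  intro s hs t ht hst
  have hab : a ≤ b := ht.1.trans ht.2
  exact intervalIntegral.integral_mono_interval le_rfl hs.1 hst
    (ae_restrict_of_forall_mem measurableSet_Ioc fun u hu => hf0 u ⟨hu.1.le, hu.2.trans ht.2⟩)
    (hf.mono_set (uIcc_subset_Icc (left_mem_Icc.2 hab) ht)).intervalIntegrable

variable [NullSingletonClass μ]

theorem continuousOn_intervalIntegral_Icc {E : Type*} [NormedAddCommGroup E] [NormedSpace ℝ E]
    {f : ℝ → E} (hab : a ≤ b) (hf : IntegrableOn f (Icc a b) μ) :
    ContinuousOn (fun t => ∫ s in a..t, f s ∂μ) (Icc a b) := by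
  rw [← uIcc_of_le hab] at hf ⊢
  exact intervalIntegral.continuousOn_primitive_interval hf

theorem tendsto_intervalIntegral_nhdsGT_zero {E : Type*} [NormedAddCommGroup E]
    [NormedSpace ℝ E] {f : ℝ → E} (hab : a < b) (hf : IntegrableOn f (Icc a b) μ) :
    Tendsto (fun t => ∫ s in a..t, f s ∂μ) (𝓝[>] a) (𝓝 0) := by
  have hcont := continuousOn_intervalIntegral_Icc hab.le hf a (left_mem_Icc.2 hab.le)
  simpa only [intervalIntegral.integral_same] using
    hcont.tendsto.mono_left (nhdsWithin_le_of_mem (Icc_mem_nhdsGT hab))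

theorem eventually_nhdsGT_intervalIntegral_mul_eq_zero {B : ℝ} (hB : 0 ≤ B) (hab : a < b)
    (hγ : IntegrableOn γ (Icc a b) μ) (hγφ : IntegrableOn (fun s => γ s * φ s) (Icc a b) μ)
    (hγ0 : ∀ t ∈ Icc a b, 0 ≤ γ t) (hφ0 : ∀ t ∈ Icc a b, 0 ≤ φ t)
    (hφ : ∀ t ∈ Icc a b, φ t ≤ B * ∫ s in a..t, γ s * φ s ∂μ) :
    ∀ᶠ t in 𝓝[>] a, ∫ s in a..t, γ s * φ s ∂μ = 0 := by
  have hsmall : ∀ᶠ t in 𝓝[>] a, B * ∫ s in a..t, γ s ∂μ < 1 :=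
    ((tendsto_intervalIntegral_nhdsGT_zero hab hγ).const_mul B).eventually_lt_const (by simp)
  filter_upwards [hsmall, Ioc_mem_nhdsGT hab] with t hBt ht
  have htab : t ∈ Icc a b := Ioc_subset_Icc_self ht
  have hsub : Icc a t ⊆ Icc a b := Icc_subset_Icc_right ht.2
  have hmono := monotoneOn_intervalIntegral_of_nonneg hγφ
    fun s hs => mul_nonneg (hγ0 s hs) (hφ0 s hs)
  exact intervalIntegral_mul_eq_zero_of_le_const_mul ht.1.le (hγ.mono_set hsub)
    (hγφ.mono_set hsub) (fun s hs => hγ0 s (hsub hs)) (fun s hs => hφ0 s (hsub hs)) hBt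
    fun s hs => (hφ s (hsub hs)).trans <|
      mul_le_mul_of_nonneg_left (hmono (hsub hs) htab hs.2) hB

theorem intervalIntegral_mul_eq_zero_of_le_mul_intervalIntegral {B : ℝ} (hB : 0 ≤ B)
    (hγ : IntegrableOn γ (Icc a b) μ) (hγφ : IntegrableOn (fun s => γ s * φ s) (Icc a b) μ)
    (hγ0 : ∀ t ∈ Icc a b, 0 ≤ γ t) (hφ0 : ∀ t ∈ Icc a b, 0 ≤ φ t)
    (hφ : ∀ t ∈ Icc a b, φ t ≤ B * ∫ s in a..t, γ s * φ s ∂μ) :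
    ∀ t ∈ Icc a b, ∫ s in a..t, γ s * φ s ∂μ = 0 := by
  intro t ht
  let G := fun t => ∫ s in a..t, γ s * φ s ∂μ
  have hab : a ≤ b := ht.1.trans ht.2
  have isClosed_zeros : IsClosed ({t | G t = 0} ∩ Icc a b) := by
    rw [inter_comm]
    exact (continuousOn_intervalIntegral_Icc hab hγφ).preimage_isClosed_of_isClosed isClosed_Icc
      isClosed_singleton
  refine isClosed_zeros.Icc_subset_of_forall_mem_nhdsWithin intervalIntegral.integral_same ?_ ht
  rintro c ⟨hGc : G c = 0, hc⟩
  have hsub : Icc c b ⊆ Icc a b := Icc_subset_Icc_left hc.1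
  have G_eq_integral_from_c : ∀ t ∈ Icc c b, G t = ∫ s in c..t, γ s * φ s ∂μ := by
    intro t ht
    have intervalIntegrable {u v : ℝ} (hu : u ∈ Icc a b) (hv : v ∈ Icc a b) :
        IntervalIntegrable (fun s => γ s * φ s) μ u v :=
      (hγφ.mono_set (uIcc_subset_Icc hu hv)).intervalIntegrable
    have hac := intervalIntegrable (left_mem_Icc.2 hab) (Ico_subset_Icc_self hc)
    have hct := intervalIntegrable (Ico_subset_Icc_self hc) (hsub ht)
    calc G t = G c + ∫ s in c..t, γ s * φ s ∂μ :=
          (intervalIntegral.integral_add_adjacent_intervals hac hct).symm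
      _ = ∫ s in c..t, γ s * φ s ∂μ := by rw [hGc, zero_add]
  have hzero := eventually_nhdsGT_intervalIntegral_mul_eq_zero hB hc.2 (hγ.mono_set hsub)
    (hγφ.mono_set hsub) (fun s hs => hγ0 s (hsub hs)) (fun s hs => hφ0 s (hsub hs))
    fun s hs => (hφ s (hsub hs)).trans_eq (by rw [← G_eq_integral_from_c s hs])
  filter_upwards [hzero, Ioc_mem_nhdsGT hc.2] with t hGt ht
  exact (G_eq_integral_from_c t (Ioc_subset_Icc_self ht)).trans hGt

theorem stmt_11_general {t₀ A B : ℝ} (hb : b ∈ Icc t₀ a)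
    (hγ : IntegrableOn γ (Icc t₀ a) μ) (hγφ : IntegrableOn (fun s => γ s * φ s) (Icc t₀ a) μ)
    (hγ0 : ∀ t ∈ Icc t₀ a, 0 ≤ γ t) (hφ0 : ∀ t ∈ Icc t₀ a, 0 ≤ φ t) (hB : 0 ≤ B)
    (hsmall : (A + B) * ∫ s in t₀..b, γ s ∂μ < 1)
    (hφ : ∀ t ∈ Icc t₀ a,
      φ t ≤ A * (∫ s in t₀..b, γ s * φ s ∂μ) + B * ∫ s in t₀..t, γ s * φ s ∂μ) :
    ∀ t ∈ Icc t₀ a, φ t = 0 := by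
  have hsub : Icc t₀ b ⊆ Icc t₀ a := Icc_subset_Icc_right hb.2
  have hmono := monotoneOn_intervalIntegral_of_nonneg hγφ
    fun t ht => mul_nonneg (hγ0 t ht) (hφ0 t ht)
  have integral_to_b_eq_zero : ∫ s in t₀..b, γ s * φ s ∂μ = 0 :=
    intervalIntegral_mul_eq_zero_of_le_const_mul hb.1 (hγ.mono_set hsub) (hγφ.mono_set hsub)
      (fun t ht => hγ0 t (hsub ht)) (fun t ht => hφ0 t (hsub ht)) hsmall fun t ht => by
        have hBt := mul_le_mul_of_nonneg_left (hmono (hsub ht) hb ht.2) hB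
        linarith [hφ t (hsub ht)]
  have volterra : ∀ t ∈ Icc t₀ a, φ t ≤ B * ∫ s in t₀..t, γ s * φ s ∂μ := by
    simpa only [integral_to_b_eq_zero, mul_zero, zero_add] using hφ
  intro t ht
  have primitive_eq_zero :=
    intervalIntegral_mul_eq_zero_of_le_mul_intervalIntegral hB hγ hγφ hγ0 hφ0 volterra t ht
  refine le_antisymm ?_ (hφ0 t ht)
  simpa only [primitive_eq_zero, mul_zero] using volterra t ht

end LinearIntegralInequality

/-- **Vanishing lemma for a linear integral inequality (key step in the proof of
Theorem 2.3).** If `(A + B)·∫₀ᵇ γ < 1` and a nonnegative continuous `φ` satisfies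
`φ(t) ≤ A·∫₀ᵇ γφ + B·∫₀ᵗ γφ` on `[0,a]`, then `φ ≡ 0` on `[0,a]`. -/
theorem stmt_11
    {a b : ℝ} (ha : 0 < a) (hb : b ∈ Set.Icc (0:ℝ) a)
    (γ : ℝ → ℝ) (hγint : IntegrableOn γ (Set.Icc 0 a)) (hγ0 : ∀ t, 0 ≤ γ t)
    (A B : ℝ) (hA : 0 ≤ A) (hB : 0 ≤ B)
    (hsmall : (A + B) * (∫ s in (0:ℝ)..b, γ s) < 1)
    (φ : ℝ → ℝ) (hφc : ContinuousOn φ (Set.Icc 0 a))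
    (hφ0 : ∀ t ∈ Set.Icc (0:ℝ) a, 0 ≤ φ t)
    (hineq : ∀ t ∈ Set.Icc (0:ℝ) a,
      φ t ≤ A * (∫ s in (0:ℝ)..b, γ s * φ s) + B * ∫ s in (0:ℝ)..t, γ s * φ s) :
    ∀ t ∈ Set.Icc (0:ℝ) a, φ t = 0 :=
  stmt_11_general hb hγint (hγint.mul_continuousOn hφc isCompact_Icc) (fun t _ => hγ0 t) hφ0 hB
    hsmall hineq
end

section
/- Equicontinuity of dominated evolution integrals (established in the proof of Lemma 2.4): Let h ∈ L¹(0,a) be nonnegative and let D be the set of all strongly measurable functions g : [0,a] → X with ‖g(s)‖ ≤ h(s) for a.e. s ∈ [0,a]. Then the family of functions {v_g : g ∈ D}, where v_g(t) = ∫₀ᵗ T(t,s)g(s) ds (Bochner integral), is uniformly equicontinuous on [0,a]: for every ε > 0 there exists η > 0 such that for all g ∈ D and all t, t̄ ∈ [0,a] with |t − t̄| < η, ‖v_g(t) − v_g(t̄)‖ ≤ ε. -/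
open MeasureTheory

/-!
On the compact triangle `a ≤ s ≤ t ≤ b` a continuous kernel `K` is bounded, say by `M`, and
uniformly continuous. Splitting the integral up to `t` at a point `t' ≤ t` gives
`v_g(t) - v_g(t') = ∫ₐ^{t'} (K(t,s) - K(t',s)) g(s) ds + ∫_{t'}^t K(t,s) g(s) ds`,
and, with `H(t) = ∫ₐᵗ h`, the two terms are bounded by `sup_s ‖K(t,s) - K(t',s)‖ * H(t')` and
`M * (H(t) - H(t'))`. Neither bound depends on `g`, and both are small when `t - t'` is, because
`K` and `H` are uniformly continuous.
-/

open Set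

section Metric

variable {α β γ ι : Type*} [PseudoMetricSpace α] [PseudoMetricSpace β] [PseudoMetricSpace γ]

theorem uniformEquicontinuousOn_iff_dist {F : ι → α → β} {S : Set α} :
    UniformEquicontinuousOn F S ↔ ∀ ε > 0, ∃ δ > 0, ∀ x ∈ S, ∀ y ∈ S, dist x y < δ →
      ∀ i, dist (F i x) (F i y) < ε := by
  rw [(Metric.uniformity_basis_dist.inf_principal (S ×ˢ S)).uniformEquicontinuousOn_iff
    Metric.uniformity_basis_dist]
  simp only [mem_inter_iff, mem_ofPred_eq, mem_prod, and_imp]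
  grind

theorem exists_forall_dist_lt_of_uniformContinuousOn {f : α → β → γ} {S : Set (α × β)}
    (hf : UniformContinuousOn (fun p : α × β => f p.1 p.2) S) {ε : ℝ} (hε : 0 < ε) :
    ∃ δ > 0, ∀ x x' y, (x, y) ∈ S → (x', y) ∈ S → dist x x' < δ →
      dist (f x y) (f x' y) < ε := by
  obtain ⟨δ, hδ, hclose⟩ := Metric.uniformContinuousOn_iff.1 hf ε hε
  exact ⟨δ, hδ, fun x x' y hx hx' hd => hclose (x, y) hx (x', y) hx' (by simpa [Prod.dist_eq, hδ])⟩

end Metric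

theorem uniformContinuousOn_primitive {G : Type*} [NormedAddCommGroup G] [NormedSpace ℝ G]
    {μ : Measure ℝ} [NullSingletonClass μ] {f : ℝ → G} {a b : ℝ}
    (hf : IntegrableOn f (Icc a b) μ) :
    UniformContinuousOn (fun t => ∫ s in a..t, f s ∂μ) (Icc a b) := by
  refine isCompact_Icc.uniformContinuousOn_of_continuous ?_
  refine (intervalIntegral.continuousOn_primitive hf).congr fun t ht => ?_
  exact intervalIntegral.integral_of_le ht.1

/-- The triangle `a ≤ s ≤ t ≤ b`, as a set of pairs `(t, s)`: the domain on which the kernel of a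
Volterra operator on `[a, b]` matters. -/
def volterraTriangle (a b : ℝ) : Set (ℝ × ℝ) :=
  {p | a ≤ p.2 ∧ p.2 ≤ p.1 ∧ p.1 ≤ b}

theorem isCompact_volterraTriangle (a b : ℝ) : IsCompact (volterraTriangle a b) := by
  have hclosed : IsClosed (volterraTriangle a b) :=
    (isClosed_le continuous_const continuous_snd).inter
      ((isClosed_le continuous_snd continuous_fst).inter
        (isClosed_le continuous_fst continuous_const))
  refine (isCompact_Icc (a := (a, a)) (b := (b, b))).of_isClosed_subset hclosed ?_
  rintro ⟨t, s⟩ ⟨has, hst, htb⟩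
  exact ⟨⟨has.trans hst, has⟩, ⟨htb, hst.trans htb⟩⟩

/-- The a.e. strongly measurable functions whose norm is a.e. dominated by `h`: the set `D` of the
paper, for `μ` the restriction of Lebesgue measure to `[0, a]`. -/
def dominatedFunctions {α : Type*} [MeasurableSpace α] (E : Type*) [NormedAddCommGroup E]
    (μ : Measure α) (h : α → ℝ) : Set (α → E) :=
  {g | AEStronglyMeasurable g μ ∧ ∀ᵐ s ∂μ, ‖g s‖ ≤ h s}

section Volterra

variable {𝕜 E F : Type*} [NontriviallyNormedField 𝕜]
  [NormedAddCommGroup E] [NormedSpace 𝕜 E] [NormedAddCommGroup F] [NormedSpace 𝕜 F]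

theorem integrableOn_clm_apply_of_continuousOn {α : Type*} [TopologicalSpace α] [T2Space α]
    [MeasurableSpace α] [OpensMeasurableSpace α] {μ : Measure α} {S : Set α}
    {A : α → E →L[𝕜] F} {g : α → E} (hS : IsCompact S) (hA : ContinuousOn A S)
    (hg : IntegrableOn g S μ) : IntegrableOn (fun s => A s (g s)) S μ := by
  obtain ⟨C, hC⟩ := hS.exists_bound_of_continuousOn hA
  exact (ContinuousLinearMap.id 𝕜 (E →L[𝕜] F)).integrable_of_bilin_of_bdd_left C
    (hA.aestronglyMeasurable_of_isCompact hS hS.measurableSet)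
    (ae_restrict_of_forall_mem hS.measurableSet hC) hg

variable {μ : Measure ℝ} {h : ℝ → ℝ} {g : ℝ → E} {K : ℝ → ℝ → E →L[𝕜] F} {a b : ℝ}

theorem intervalIntegrable_volterra
    (hK : ContinuousOn (fun p : ℝ × ℝ => K p.1 p.2) (volterraTriangle a b))
    (hg : IntegrableOn g (Icc a b) μ) {t : ℝ} (ht : t ∈ Icc a b) :
    IntervalIntegrable (fun s => K t s (g s)) μ a t := by
  have hKt : ContinuousOn (K t) (Icc a t) :=
    hK.comp (f := fun s => (t, s)) (by fun_prop) fun s hs => ⟨hs.1, hs.2, ht.2⟩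
  have hintegrable := integrableOn_clm_apply_of_continuousOn isCompact_Icc hKt
    (hg.mono_set (Icc_subset_Icc_right ht.2))
  exact (uIcc_of_le ht.1 ▸ hintegrable).intervalIntegrable

variable [NormedSpace ℝ F]

theorem norm_intervalIntegral_clm_apply_le {A : ℝ → E →L[𝕜] F} {c d C : ℝ} (hcd : c ≤ d)
    (hA : ∀ s ∈ Ioc c d, ‖A s‖ ≤ C) (hh : IntervalIntegrable h μ c d)
    (hg : ∀ᵐ s ∂μ.restrict (Ioc c d), ‖g s‖ ≤ h s) :
    ‖∫ s in c..d, A s (g s) ∂μ‖ ≤ C * ∫ s in c..d, h s ∂μ := by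
  rw [← intervalIntegral.integral_const_mul]
  refine intervalIntegral.norm_integral_le_of_norm_le hcd ?_ (hh.const_mul C)
  filter_upwards [(ae_restrict_iff' measurableSet_Ioc).1 hg] with s hgs hs
  exact (A s).le_of_opNorm_le_of_le (hA s hs) (hgs hs)

theorem norm_intervalIntegral_clm_apply_sub_le {A B : ℝ → E →L[𝕜] F} {c d e δ M : ℝ}
    (hcd : c ≤ d) (hde : d ≤ e)
    (hA : IntervalIntegrable (fun s => A s (g s)) μ c e)
    (hB : IntervalIntegrable (fun s => B s (g s)) μ c d)
    (hAB : ∀ s ∈ Ioc c d, ‖A s - B s‖ ≤ δ) (hAM : ∀ s ∈ Ioc d e, ‖A s‖ ≤ M)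
    (hh : IntervalIntegrable h μ c e) (hg : ∀ᵐ s ∂μ.restrict (Ioc c e), ‖g s‖ ≤ h s) :
    ‖(∫ s in c..e, A s (g s) ∂μ) - ∫ s in c..d, B s (g s) ∂μ‖
      ≤ δ * (∫ s in c..d, h s ∂μ) + M * ∫ s in d..e, h s ∂μ := by
  have hd : d ∈ uIcc c e := mem_uIcc_of_le hcd hde
  have hleft : uIcc c d ⊆ uIcc c e := uIcc_subset_uIcc_left hd
  have hright : uIcc d e ⊆ uIcc c e := uIcc_subset_uIcc_right hd
  have hsplit : (∫ s in c..e, A s (g s) ∂μ) - ∫ s in c..d, B s (g s) ∂μ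
      = (∫ s in c..d, (A s - B s) (g s) ∂μ) + ∫ s in d..e, A s (g s) ∂μ := by
    simp only [sub_apply]
    rw [intervalIntegral.integral_sub (hA.mono_set hleft) hB, sub_add_eq_add_sub,
      intervalIntegral.integral_add_adjacent_intervals (hA.mono_set hleft) (hA.mono_set hright)]
  rw [hsplit]
  exact norm_add_le_of_le
    (norm_intervalIntegral_clm_apply_le hcd hAB (hh.mono_set hleft)
      (ae_restrict_of_ae_restrict_of_subset (Ioc_subset_Ioc_right hde) hg))
    (norm_intervalIntegral_clm_apply_le hde hAM (hh.mono_set hright)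
      (ae_restrict_of_ae_restrict_of_subset (Ioc_subset_Ioc_left hcd) hg))

/-- The Volterra integral `v_g(t) = ∫ₐᵗ K(t,s) g(s) dμ(s)`. -/
noncomputable def volterraIntegral (μ : Measure ℝ) (K : ℝ → ℝ → E →L[𝕜] F) (a : ℝ) (g : ℝ → E)
    (t : ℝ) : F :=
  ∫ s in a..t, K t s (g s) ∂μ

theorem norm_volterraIntegral_sub_le
    (hK : ContinuousOn (fun p : ℝ × ℝ => K p.1 p.2) (volterraTriangle a b))
    (hh : IntegrableOn h (Icc a b) μ) (hg : g ∈ dominatedFunctions E (μ.restrict (Icc a b)) h)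
    {t t' δ M : ℝ} (ht : t ∈ Icc a b) (ht' : t' ∈ Icc a b) (hle : t' ≤ t)
    (hδ : ∀ s ∈ Ioc a t', ‖K t s - K t' s‖ ≤ δ) (hM : ∀ s ∈ Ioc t' t, ‖K t s‖ ≤ M) :
    ‖volterraIntegral μ K a g t - volterraIntegral μ K a g t'‖
      ≤ δ * (∫ s in a..t', h s ∂μ) + M * ((∫ s in a..t, h s ∂μ) - ∫ s in a..t', h s ∂μ) := by
  have hgint : IntegrableOn g (Icc a b) μ := hh.mono' hg.1 hg.2
  have hhint {x : ℝ} (hx : x ∈ Icc a b) : IntervalIntegrable h μ a x :=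
    (hh.mono_set (uIcc_subset_Icc (left_mem_Icc.2 (hx.1.trans hx.2)) hx)).intervalIntegrable
  rw [intervalIntegral.integral_interval_sub_left (hhint ht) (hhint ht')]
  exact norm_intervalIntegral_clm_apply_sub_le ht'.1 hle
    (intervalIntegrable_volterra hK hgint ht) (intervalIntegrable_volterra hK hgint ht') hδ hM
    (hhint ht) (ae_restrict_of_ae_restrict_of_subset
      (Ioc_subset_Icc_self.trans (Icc_subset_Icc_right ht.2)) hg.2)

theorem stmt_13_general [CompleteSpace F] [NullSingletonClass μ]
    (hK : ContinuousOn (fun p : ℝ × ℝ => K p.1 p.2) (volterraTriangle a b))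
    (hh : IntegrableOn h (Icc a b) μ) :
    UniformEquicontinuousOn
      (fun g : dominatedFunctions E (μ.restrict (Icc a b)) h => volterraIntegral μ K a g)
      (Icc a b) := by
  have hcompact := isCompact_volterraTriangle a b
  have hH := uniformContinuousOn_primitive hh
  obtain ⟨M, hM⟩ := hcompact.exists_bound_of_continuousOn hK
  obtain ⟨L, hL⟩ := isCompact_Icc.exists_bound_of_continuousOn hH.continuousOn
  refine uniformEquicontinuousOn_iff_dist.2 fun ε hε => ?_
  obtain ⟨δ, hδ, hLδ⟩ := exists_pos_mul_lt (half_pos hε) L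
  obtain ⟨ρ, hρ, hMρ⟩ := exists_pos_mul_lt (half_pos hε) M
  obtain ⟨η₁, hη₁, hKη⟩ := exists_forall_dist_lt_of_uniformContinuousOn
    (hcompact.uniformContinuousOn_of_continuous hK) hδ
  obtain ⟨η₂, hη₂, hHη⟩ := Metric.uniformContinuousOn_iff.1 hH ρ hρ
  refine ⟨min η₁ η₂, lt_min hη₁ hη₂, fun t ht t' ht' hd g => ?_⟩
  wlog hle : t' ≤ t generalizing t t'
  · rw [dist_comm]
    exact this t' ht' t ht (by rwa [dist_comm]) (le_of_not_ge hle)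
  have hM_nonneg : 0 ≤ M := (norm_nonneg _).trans (hM (t, t) ⟨ht.1, le_rfl, ht.2⟩)
  have hKsub : ∀ s ∈ Ioc a t', ‖K t s - K t' s‖ ≤ δ := fun s hs => by
    rw [← dist_eq_norm]
    exact (hKη t t' s ⟨hs.1.le, hs.2.trans hle, ht.2⟩ ⟨hs.1.le, hs.2, ht'.2⟩
      (hd.trans_le (min_le_left _ _))).le
  have hKM : ∀ s ∈ Ioc t' t, ‖K t s‖ ≤ M := fun s hs =>
    hM (t, s) ⟨ht'.1.trans hs.1.le, hs.2, ht.2⟩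
  have hHL : ∫ s in a..t', h s ∂μ ≤ L := (le_abs_self _).trans (hL t' ht')
  have hHρ : (∫ s in a..t, h s ∂μ) - ∫ s in a..t', h s ∂μ ≤ ρ :=
    (le_abs_self _).trans (hHη t ht t' ht' (hd.trans_le (min_le_right _ _))).le
  calc dist (volterraIntegral μ K a g t) (volterraIntegral μ K a g t')
      ≤ δ * (∫ s in a..t', h s ∂μ) + M * ((∫ s in a..t, h s ∂μ) - ∫ s in a..t', h s ∂μ) := by
        rw [dist_eq_norm]
        exact norm_volterraIntegral_sub_le hK hh g.2 ht ht' hle hKsub hKM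
    _ ≤ δ * L + M * ρ := by gcongr
    _ < ε := by linarith

end Volterra

/-- **Equicontinuity of dominated evolution integrals (from the proof of Lemma 2.4).**
The family `v_g(t) = ∫₀ᵗ T(t,s)g(s) ds`, for `g` strongly measurable with `‖g‖ ≤ h` a.e.
on `[0,a]` (`h ∈ L¹` nonnegative), is uniformly equicontinuous on `[0,a]`. -/
theorem stmt_13
    {X : Type*} [NormedAddCommGroup X] [NormedSpace ℝ X] [CompleteSpace X]
    {a : ℝ} (ha : 0 < a)
    (T : ℝ → ℝ → X →L[ℝ] X)
    (hTcont : ContinuousOn (fun p : ℝ × ℝ => T p.1 p.2)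
      {p : ℝ × ℝ | 0 ≤ p.2 ∧ p.2 ≤ p.1 ∧ p.1 ≤ a})
    (hTid : ∀ s ∈ Set.Icc (0:ℝ) a, T s s = ContinuousLinearMap.id ℝ X)
    (hTsemi : ∀ s r t : ℝ, 0 ≤ s → s ≤ r → r ≤ t → t ≤ a → (T t r).comp (T r s) = T t s)
    {M : ℝ} (hM : 0 < M)
    (hTM : ∀ t s : ℝ, 0 ≤ s → s ≤ t → t ≤ a → ‖T t s‖ ≤ M)
    (h : ℝ → ℝ) (hhint : IntegrableOn h (Set.Icc 0 a)) (hh0 : ∀ t, 0 ≤ h t) :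
    ∀ ε : ℝ, 0 < ε → ∃ η : ℝ, 0 < η ∧
      ∀ g : ℝ → X, AEStronglyMeasurable g (volume.restrict (Set.Icc 0 a)) →
        (∀ᵐ s ∂(volume.restrict (Set.Icc 0 a)), ‖g s‖ ≤ h s) →
        ∀ t ∈ Set.Icc (0:ℝ) a, ∀ t' ∈ Set.Icc (0:ℝ) a, |t - t'| < η →
          ‖(∫ s in (0:ℝ)..t, T t s (g s)) - ∫ s in (0:ℝ)..t', T t' s (g s)‖ ≤ ε := by
  intro ε hε
  obtain ⟨η, hη, hclose⟩ := uniformEquicontinuousOn_iff_dist.1 (stmt_13_general hTcont hhint) ε hε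
  exact ⟨η, hη, fun g hg hgh t ht t' ht' hd =>
    (dist_eq_norm _ _).symm.trans_le (hclose t ht t' ht' hd ⟨g, hg, hgh⟩).le⟩
end

section
/- Invariance of the ball under condition (9): Let R > 0 be constant and Ū = {u ∈ C([0,a];X) : ‖u(t)‖ ≤ R for all t}. Assume (h1), (h2), and that there exist a nonnegative δ ∈ L¹(0,a) and a continuous nondecreasing ψ : [0,∞) → [0,∞) with ψ(s) > 0 for s > 0 such that ‖Φ(u)(t)‖ ≤ δ(t)ψ(‖u(t)‖) for a.e. t ∈ [0,a] and all u ∈ Ū, and R/ψ(R) ≥ M²‖BF‖·∫₀^{a_F} δ(s) ds + M·∫₀ᵃ δ(s) ds. Then N(Ū) ⊆ Ū, i.e. ‖N(u)(t)‖ ≤ R for every u ∈ Ū and every t ∈ [0,a]. -/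
open MeasureTheory

/-- The set `Ū` of continuous functions `u : [0,a] → X` with `‖u t‖ ≤ R t` for all `t`. -/
def UbarSet {X : Type*} [NormedAddCommGroup X] (a : ℝ) (R : ℝ → ℝ) :
    Set C(Set.Icc (0:ℝ) a, X) :=
  {u | ∀ t : Set.Icc (0:ℝ) a, ‖u t‖ ≤ R t}

/-!
A functional that only sees `v` on `[0, a_F]` does not change when `v` is held constant after time
`a_F`, so its value is at most its norm times the supremum of `‖v‖` over `[0, a_F]`. Applied to
`v t = ∫₀ᵗ T(t,s) f(s) ds`, which is bounded on `[0, b]` by `M ∫₀ᵇ ‖f‖`, this is what brings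
`∫₀^{a_F} δ` instead of `∫₀ᵃ δ` into the first term of condition (9).
-/

section SupportedFunctional

variable {𝕜 K E G : Type*} [NontriviallyNormedField 𝕜]
  [SeminormedAddCommGroup E] [NormedSpace 𝕜 E] [SeminormedAddCommGroup G] [NormedSpace 𝕜 G]
  [TopologicalSpace K] [CompactSpace K] [LinearOrder K] [OrderClosedTopology K]

theorem norm_apply_le_of_eqOn_Iic {c : K} (L : C(K, E) →L[𝕜] G)
    (hL : ∀ u v : C(K, E), Set.EqOn u v (Set.Iic c) → L u = L v)
    {v : C(K, E)} {C : ℝ} (hv : ∀ t ≤ c, ‖v t‖ ≤ C) : ‖L v‖ ≤ ‖L‖ * C := by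
  have : Nonempty K := ⟨c⟩
  let truncate : C(K, K) := ⟨fun t => min t c, continuous_id.min continuous_const⟩
  have htruncate : L v = L (v.comp truncate) :=
    hL _ _ fun t ht => congrArg v (min_eq_left ht).symm
  have hbound : ‖v.comp truncate‖ ≤ C :=
    (ContinuousMap.norm_le_of_nonempty _).2 fun t => hv _ (min_le_right t c)
  exact htruncate ▸ L.le_opNorm_of_le hbound

end SupportedFunctional

section IntegralBounds

variable {𝕜 E G : Type*} [NontriviallyNormedField 𝕜]
  [SeminormedAddCommGroup E] [NormedSpace 𝕜 E]
  [NormedAddCommGroup G] [NormedSpace 𝕜 G] [NormedSpace ℝ G]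

theorem norm_integral_clm_apply_le {α : Type*} [MeasurableSpace α] {μ : Measure α}
    {A : α → E →L[𝕜] G} {f : α → E} {g : α → ℝ} {M : ℝ}
    (hA : ∀ᵐ s ∂μ, ‖A s‖ ≤ M) (hf : ∀ᵐ s ∂μ, ‖f s‖ ≤ g s) (hg : Integrable g μ) :
    ‖∫ s, A s (f s) ∂μ‖ ≤ M * ∫ s, g s ∂μ := by
  rw [← integral_const_mul]
  refine norm_integral_le_of_norm_le (hg.const_mul M) ?_
  filter_upwards [hA, hf] with s hAs hfs
  exact (A s).le_of_opNorm_le_of_le hAs hfs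

theorem norm_intervalIntegral_clm_apply_le_of_le {A : ℝ → E →L[𝕜] G} {f : ℝ → E} {g : ℝ → ℝ}
    {M x y z : ℝ} (hxy : x ≤ y) (hyz : y ≤ z) (hA : ∀ s ∈ Set.Icc x y, ‖A s‖ ≤ M)
    (hf : ∀ᵐ s ∂volume.restrict (Set.Icc x z), ‖f s‖ ≤ g s)
    (hg : IntegrableOn g (Set.Icc x z)) :
    ‖∫ s in x..y, A s (f s)‖ ≤ M * ∫ s in x..z, g s := by
  have hM : 0 ≤ M := (norm_nonneg _).trans (hA x ⟨le_rfl, hxy⟩)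
  have hsub : Set.Icc x y ⊆ Set.Icc x z := Set.Icc_subset_Icc_right hyz
  have hg_nonneg : 0 ≤ᵐ[volume.restrict (Set.Icc x z)] g :=
    hf.mono fun s hs => (norm_nonneg _).trans hs
  simp only [intervalIntegral.integral_of_le, hxy, hxy.trans hyz, ← integral_Icc_eq_integral_Ioc]
  calc ‖∫ s in Set.Icc x y, A s (f s)‖
      ≤ M * ∫ s in Set.Icc x y, g s :=
        norm_integral_clm_apply_le ((ae_restrict_iff' measurableSet_Icc).2 (.of_forall hA))
          (ae_restrict_of_ae_restrict_of_subset hsub hf) (hg.mono_set hsub)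
    _ ≤ M * ∫ s in Set.Icc x z, g s :=
        mul_le_mul_of_nonneg_left (setIntegral_mono_set hg hg_nonneg hsub.eventuallyLE) hM

end IntegralBounds

theorem ae_norm_le_mul_of_mem_UbarSet {X E : Type*} [NormedAddCommGroup X]
    [SeminormedAddCommGroup E] {a R : ℝ} {μ : Measure ℝ} {δ ψ : ℝ → ℝ} {f : ℝ → E}
    {u : C(Set.Icc (0 : ℝ) a, X)} (hu : u ∈ UbarSet a fun _ => R)
    (hδ0 : ∀ t ∈ Set.Icc 0 a, 0 ≤ δ t) (hψm : MonotoneOn ψ (Set.Ici 0))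
    (hf : ∀ᵐ t ∂μ.restrict (Set.Icc 0 a), ∀ ht : t ∈ Set.Icc (0 : ℝ) a,
      ‖f t‖ ≤ δ t * ψ ‖u ⟨t, ht⟩‖) :
    ∀ᵐ t ∂μ.restrict (Set.Icc 0 a), ‖f t‖ ≤ δ t * ψ R := by
  filter_upwards [hf, ae_restrict_mem measurableSet_Icc] with t hft ht
  have hut : ‖u ⟨t, ht⟩‖ ≤ R := hu ⟨t, ht⟩
  exact (hft ht).trans <| mul_le_mul_of_nonneg_left
    (hψm (norm_nonneg _) ((norm_nonneg _).trans hut) hut) (hδ0 t ht)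

section NonlocalProblem

variable {X : Type*} [NormedAddCommGroup X] [NormedSpace ℝ X] {a M : ℝ} {T : ℝ → ℝ → X →L[ℝ] X}

theorem norm_nonlocal_add_integral_le {t₀ : ℝ}
    (hTM : ∀ t s : ℝ, t₀ ≤ s → s ≤ t → t ≤ a → ‖T t s‖ ≤ M)
    {L : C(Set.Icc t₀ a, X) →L[ℝ] X} {c : Set.Icc t₀ a}
    (hL : ∀ u v : C(Set.Icc t₀ a, X), Set.EqOn u v (Set.Iic c) → L u = L v)
    {f : ℝ → X} {g : ℝ → ℝ} (hf : ∀ᵐ s ∂volume.restrict (Set.Icc t₀ a), ‖f s‖ ≤ g s)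
    (hg : IntegrableOn g (Set.Icc t₀ a)) {v : C(Set.Icc t₀ a, X)}
    (hv : ∀ t : Set.Icc t₀ a, v t = ∫ s in t₀..t, T t s (f s)) (t : Set.Icc t₀ a) :
    ‖T t t₀ (L v) + v t‖ ≤ M ^ 2 * ‖L‖ * (∫ s in t₀..c, g s) + M * ∫ s in t₀..a, g s := by
  have hv_le : ∀ b ∈ Set.Icc t₀ a, ∀ r : Set.Icc t₀ a, (r : ℝ) ≤ b →
      ‖v r‖ ≤ M * ∫ s in t₀..b, g s := by
    intro b hb r hrb
    have hsub : Set.Icc t₀ b ⊆ Set.Icc t₀ a := Set.Icc_subset_Icc_right hb.2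
    rw [hv]
    exact norm_intervalIntegral_clm_apply_le_of_le r.2.1 hrb
      (fun s hs => hTM r s hs.1 hs.2 r.2.2)
      (ae_restrict_of_ae_restrict_of_subset hsub hf) (hg.mono_set hsub)
  have hLv : ‖L v‖ ≤ ‖L‖ * (M * ∫ s in t₀..c, g s) :=
    norm_apply_le_of_eqOn_Iic L hL (hv_le c c.2)
  calc ‖T t t₀ (L v) + v t‖ ≤ ‖T t t₀ (L v)‖ + ‖v t‖ := norm_add_le _ _
    _ ≤ M * (‖L‖ * (M * ∫ s in t₀..c, g s)) + M * ∫ s in t₀..a, g s :=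
        add_le_add ((T t t₀).le_of_opNorm_le_of_le (hTM t t₀ le_rfl t.2.1 t.2.2) hLv)
          (hv_le a ⟨t.2.1.trans t.2.2, le_rfl⟩ t t.2.2)
    _ = M ^ 2 * ‖L‖ * (∫ s in t₀..c, g s) + M * ∫ s in t₀..a, g s := by ring

theorem stmt_14_general [CompleteSpace X]
    (_hTcont : ∀ x : X, ContinuousOn (fun p : ℝ × ℝ => T p.1 p.2 x)
      {p : ℝ × ℝ | 0 ≤ p.2 ∧ p.2 ≤ p.1 ∧ p.1 ≤ a})
    (hTM : ∀ t s : ℝ, 0 ≤ s → s ≤ t → t ≤ a → ‖T t s‖ ≤ M)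
    {R : ℝ} {Φ : C(Set.Icc (0 : ℝ) a, X) → ℝ → X}
    (_hΦint : ∀ u ∈ UbarSet a fun _ => R, IntegrableOn (Φ u) (Set.Icc 0 a))
    {L : C(Set.Icc (0 : ℝ) a, X) →L[ℝ] X} {c : Set.Icc (0 : ℝ) a}
    (hL : ∀ u v : C(Set.Icc (0 : ℝ) a, X), Set.EqOn u v (Set.Iic c) → L u = L v)
    {δ : ℝ → ℝ} (hδint : IntegrableOn δ (Set.Icc 0 a)) (hδ0 : ∀ t ∈ Set.Icc 0 a, 0 ≤ δ t)
    {ψ : ℝ → ℝ} (hψm : MonotoneOn ψ (Set.Ici 0)) (hψR : 0 < ψ R)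
    (hΦgrowth : ∀ u ∈ UbarSet a fun _ => R,
      ∀ᵐ t ∂volume.restrict (Set.Icc 0 a), ∀ ht : t ∈ Set.Icc (0 : ℝ) a,
        ‖Φ u t‖ ≤ δ t * ψ ‖u ⟨t, ht⟩‖)
    (hRψ : M ^ 2 * ‖L‖ * (∫ s in (0 : ℝ)..c, δ s) + M * (∫ s in (0 : ℝ)..a, δ s) ≤ R / ψ R)
    {N : C(Set.Icc (0 : ℝ) a, X) → C(Set.Icc (0 : ℝ) a, X)}
    (hN : ∀ u ∈ UbarSet a fun _ => R, ∃ v : C(Set.Icc (0 : ℝ) a, X),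
      (∀ t : Set.Icc (0 : ℝ) a, v t = ∫ s in (0 : ℝ)..t, T t s (Φ u s)) ∧
      ∀ t : Set.Icc (0 : ℝ) a,
        N u t = T t 0 (L v) + ∫ s in (0 : ℝ)..t, T t s (Φ u s)) :
    Set.MapsTo N (UbarSet a fun _ => R) (UbarSet a fun _ => R) := by
  intro u hu t
  obtain ⟨v, hv, hNu⟩ := hN u hu
  calc ‖N u t‖ = ‖T t 0 (L v) + v t‖ := by rw [hNu, hv]
    _ ≤ M ^ 2 * ‖L‖ * (∫ s in (0 : ℝ)..c, δ s * ψ R) + M * ∫ s in (0 : ℝ)..a, δ s * ψ R :=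
        norm_nonlocal_add_integral_le hTM hL
          (ae_norm_le_mul_of_mem_UbarSet hu hδ0 hψm (hΦgrowth u hu)) (hδint.mul_const _) hv t
    _ = (M ^ 2 * ‖L‖ * (∫ s in (0 : ℝ)..c, δ s) + M * ∫ s in (0 : ℝ)..a, δ s) * ψ R := by
        simp only [intervalIntegral.integral_mul_const]
        ring
    _ ≤ R := (le_div_iff₀ hψR).1 hRψ

end NonlocalProblem

/-- **Invariance of the ball under condition (9).** With `R > 0` constant, under (h1),
(h2) and the growth condition with `R/ψ(R) ≥ M²‖BF‖·∫₀^{a_F} δ + M·∫₀ᵃ δ`, the operator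
`N` maps `Ū = B̄_C(0,R)` into itself. -/
theorem stmt_14
    {X : Type*} [NormedAddCommGroup X] [NormedSpace ℝ X] [CompleteSpace X]
    {a : ℝ} (ha : 0 < a)
    (T : ℝ → ℝ → X →L[ℝ] X)
    (hTcont : ContinuousOn (fun p : ℝ × ℝ => T p.1 p.2)
      {p : ℝ × ℝ | 0 ≤ p.2 ∧ p.2 ≤ p.1 ∧ p.1 ≤ a})
    (hTid : ∀ s ∈ Set.Icc (0:ℝ) a, T s s = ContinuousLinearMap.id ℝ X)
    (hTsemi : ∀ s r t : ℝ, 0 ≤ s → s ≤ r → r ≤ t → t ≤ a → (T t r).comp (T r s) = T t s)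
    {M : ℝ} (hM : 0 < M)
    (hTM : ∀ t s : ℝ, 0 ≤ s → s ≤ t → t ≤ a → ‖T t s‖ ≤ M)
    -- the constant radius R
    (R : ℝ) (hR : 0 < R)
    -- (h1)
    (Φ : C(Set.Icc (0:ℝ) a, X) → ℝ → X)
    (hΦint : ∀ u ∈ UbarSet (X := X) a (fun _ => R), IntegrableOn (Φ u) (Set.Icc 0 a))
    (hΦcont : ∀ (v : ℕ → C(Set.Icc (0:ℝ) a, X)) (u : C(Set.Icc (0:ℝ) a, X)),
      (∀ n, v n ∈ UbarSet (X := X) a (fun _ => R)) → u ∈ UbarSet (X := X) a (fun _ => R) →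
      Filter.Tendsto (fun n => ‖v n - u‖) Filter.atTop (nhds 0) →
      Filter.Tendsto (fun n => ∫ s in Set.Icc (0:ℝ) a, ‖Φ (v n) s - Φ u s‖)
        Filter.atTop (nhds 0))
    -- (h2)
    (F : C(Set.Icc (0:ℝ) a, X) →L[ℝ] X) (B : X →L[ℝ] X)
    (W : X → C(Set.Icc (0:ℝ) a, X))
    (hW : ∀ (x : X) (t : Set.Icc (0:ℝ) a), W x t = T (t : ℝ) 0 x)
    (hBleft : ∀ x : X, B (x - F (W x)) = x)
    (hBright : ∀ x : X, B x - F (W (B x)) = x)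
    -- the support [0, a_F] of F
    {aF : ℝ} (haF : aF ∈ Set.Icc (0:ℝ) a)
    (hsupp : ∀ u v : C(Set.Icc (0:ℝ) a, X),
      (∀ t : Set.Icc (0:ℝ) a, (t : ℝ) ≤ aF → u t = v t) → F u = F v)
    -- the growth condition together with condition (9)
    (δ : ℝ → ℝ) (hδint : IntegrableOn δ (Set.Icc 0 a)) (hδ0 : ∀ t, 0 ≤ δ t)
    (ψ : ℝ → ℝ) (hψc : ContinuousOn ψ (Set.Ici 0)) (hψm : MonotoneOn ψ (Set.Ici 0))
    (hψ0 : ∀ s : ℝ, 0 ≤ s → 0 ≤ ψ s) (hψpos : ∀ s : ℝ, 0 < s → 0 < ψ s)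
    (hΦgrowth : ∀ u ∈ UbarSet (X := X) a (fun _ => R),
      ∀ᵐ t ∂(volume.restrict (Set.Icc 0 a)), ∀ ht : t ∈ Set.Icc (0:ℝ) a,
        ‖Φ u t‖ ≤ δ t * ψ ‖u ⟨t, ht⟩‖)
    (hRψ : M ^ 2 * ‖B.comp F‖ * (∫ s in (0:ℝ)..aF, δ s) + M * (∫ s in (0:ℝ)..a, δ s) ≤
      R / ψ R)
    -- the operator N of the problem
    (N : C(Set.Icc (0:ℝ) a, X) → C(Set.Icc (0:ℝ) a, X))
    (hN : ∀ u ∈ UbarSet (X := X) a (fun _ => R), ∃ v : C(Set.Icc (0:ℝ) a, X),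
      (∀ t : Set.Icc (0:ℝ) a, v t = ∫ s in (0:ℝ)..(t : ℝ), T (t : ℝ) s (Φ u s)) ∧
      ∀ t : Set.Icc (0:ℝ) a,
        N u t = T (t : ℝ) 0 (B (F v)) + ∫ s in (0:ℝ)..(t : ℝ), T (t : ℝ) s (Φ u s)) :
    -- conclusion: N(Ū) ⊆ Ū
    ∀ u ∈ UbarSet (X := X) a (fun _ => R), ∀ t : Set.Icc (0:ℝ) a, ‖N u t‖ ≤ R := by
  exact stmt_14_general (fun _ => hTcont.clm_apply continuousOn_const) hTM hΦint (L := B.comp F)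
    (c := ⟨aF, haF⟩) (fun u v huv => congrArg B (hsupp u v fun _ ht => huv ht)) hδint
    (fun t _ => hδ0 t) hψm (hψpos R hR) hΦgrowth hRψ hN
end

section
/- Vector-valued vanishing lemma (key step in the proof of Theorem 3.1): Let a > 0, b ∈ [0,a], let G₀ be an n×n real matrix with nonnegative entries, and let γ, γ̃ : [0,a] → ℝ^{n×n} have nonnegative Lebesgue-integrable entries with γ̃_{ij}(t) ≤ γ_{ij}(t) for a.e. t and all i,j. Set H = 2·(G₀·Γ̃ + Γ), where Γ̃ = [∫₀ᵇ γ̃_{ij}(s) ds] and Γ = [∫₀ᵇ γ_{ij}(s) ds], and assume the spectral radius satisfies ρ(H) < 1. If φ : [0,a] → ℝⁿ is continuous with componentwise nonnegative values and φ(t) ≤ 2·G₀·∫₀ᵇ γ̃(s)φ(s) ds + 2·∫₀ᵗ γ(s)φ(s) ds componentwise for all t ∈ [0,a], then φ(t) = 0 for all t ∈ [0,a]. -/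
open MeasureTheory

/-!
The coordinatewise maxima `v` of `φ⁺` over `[0, b]` satisfy `v ≤ H v`, hence `v ≤ Hᵐ v` for all
`m`; since `ρ(H) < 1` forces `Hᵐ → 0`, this gives `φ ≤ 0` on `[0, b]`. The nonlocal term is then
nonpositive, which leaves the Volterra inequality `φ(t) ≤ 2 ∫₀ᵗ γ φ` on all of `[0, a]`, to which a
Gronwall argument applies. As the kernels are merely integrable, that argument proceeds by
steps `[x, y]` on which the kernel has total mass less than `1`.
-/

open Set Filter Topology Matrix

section PowerIteration

theorem isTopologicallyNilpotent_of_spectralRadius_lt_one {A : Type*} [NormedRing A]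
    [NormedAlgebra ℂ A] [CompleteSpace A] {x : A} (hx : spectralRadius ℂ x < 1) :
    IsTopologicallyNilpotent x := by
  obtain ⟨r, hxr, hr⟩ := ENNReal.lt_iff_exists_nnreal_btwn.1 hx
  have hr1 : r < 1 := mod_cast hr
  have hle : ∀ᶠ m : ℕ in atTop, ‖x ^ m‖ ≤ (r : ℝ) ^ m := by
    have hgelfand := spectrum.pow_nnnorm_pow_one_div_tendsto_nhds_spectralRadius x
    filter_upwards [hgelfand.eventually_lt_const hxr, eventually_gt_atTop 0] with m hm hm0
    rw [one_div, ENNReal.rpow_inv_lt_iff (mod_cast hm0), ENNReal.rpow_natCast] at hm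
    exact mod_cast hm.le
  exact squeeze_zero_norm' hle (tendsto_pow_atTop_nhds_zero_of_lt_one r.2 hr1)

theorem isTopologicallyNilpotent_of_spectralRadius_map_ofReal_lt_one {ι : Type*} [Fintype ι]
    [DecidableEq ι] {H : Matrix ι ι ℝ}
    (hH : spectralRadius ℂ (H.map Complex.ofReal) < 1) : IsTopologicallyNilpotent H := by
  -- The choice of norm is immaterial: its topology is the entrywise one of the statement.
  let _ : NormedRing (Matrix ι ι ℂ) := Matrix.linftyOpNormedRing
  let _ : NormedAlgebra ℂ (Matrix ι ι ℂ) := Matrix.linftyOpNormedAlgebra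
  have _ : CompleteSpace (Matrix ι ι ℂ) := FiniteDimensional.complete ℂ _
  have hpow (m : ℕ) : ((H.map Complex.ofReal) ^ m).map Complex.re = H ^ m := by
    have hmap : (H.map Complex.ofReal) ^ m = (H ^ m).map Complex.ofReal :=
      (map_pow Complex.ofRealHom.mapMatrix H m).symm
    ext i j
    simp [hmap]
  have hre : Continuous fun M : Matrix ι ι ℂ => M.map Complex.re :=
    continuous_id.matrix_map Complex.continuous_re
  simpa [IsTopologicallyNilpotent, Function.comp_def, hpow] using
    (hre.tendsto 0).comp (isTopologicallyNilpotent_of_spectralRadius_lt_one hH)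

theorem le_pow_mulVec_of_le_mulVec {ι R : Type*} [Fintype ι] [DecidableEq ι] [Semiring R]
    [PartialOrder R] [IsOrderedRing R] {H : Matrix ι ι R} (hH : ∀ i, 0 ≤ H i) {v : ι → R}
    (hv : v ≤ H *ᵥ v) (m : ℕ) : v ≤ H ^ m *ᵥ v := by
  induction m with
  | zero => simp
  | succ m ih =>
    rw [pow_succ', ← mulVec_mulVec]
    exact hv.trans fun i => dotProduct_le_dotProduct_of_nonneg_left ih (hH i)

theorem nonpos_of_le_mulVec_of_spectralRadius_lt_one {ι : Type*} [Fintype ι] [DecidableEq ι]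
    {H : Matrix ι ι ℝ} (hH : ∀ i, 0 ≤ H i)
    (hρ : spectralRadius ℂ (H.map Complex.ofReal) < 1) {v : ι → ℝ} (hv : v ≤ H *ᵥ v) :
    v ≤ 0 := by
  have hlim : Tendsto (fun m : ℕ => H ^ m *ᵥ v) atTop (𝓝 (0 *ᵥ v)) :=
    ((continuous_id.matrix_mulVec continuous_const).tendsto (0 : Matrix ι ι ℝ)).comp
      (isTopologicallyNilpotent_of_spectralRadius_map_ofReal_lt_one hρ)
  rw [zero_mulVec] at hlim
  exact ge_of_tendsto' hlim (le_pow_mulVec_of_le_mulVec hH hv)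

end PowerIteration

section Gronwall

variable {μ : Measure ℝ} {a b : ℝ}

theorem intervalIntegrable_of_integrableOn_Icc {E : Type*} [NormedAddCommGroup E] {f : ℝ → E}
    (hf : IntegrableOn f (Icc a b) μ) {x y : ℝ} (hx : x ∈ Icc a b) (hy : y ∈ Icc a b) :
    IntervalIntegrable f μ x y :=
  (hf.mono_set (uIcc_subset_Icc hx hy)).intervalIntegrable

theorem monotoneOn_integral_of_ae_nonneg {f : ℝ → ℝ} (hf : IntegrableOn f (Icc a b) μ)
    (hf0 : ∀ᵐ s ∂μ.restrict (Icc a b), 0 ≤ f s) :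
    MonotoneOn (fun t => ∫ s in a..t, f s ∂μ) (Icc a b) := fun _ hx _ hy hxy =>
  intervalIntegral.integral_mono_interval le_rfl hx.1 hxy
    (ae_restrict_of_ae_restrict_of_subset
      (Ioc_subset_Icc_self.trans (Icc_subset_Icc_right hy.2)) hf0)
    (intervalIntegrable_of_integrableOn_Icc hf (left_mem_Icc.2 (hy.1.trans hy.2)) hy)

theorem integral_nonpos_of_ae_le_mul_integral_of_integral_lt_one {f g : ℝ → ℝ} {x y : ℝ}
    (hf : IntegrableOn f (Icc a b) μ) (hg : IntegrableOn g (Icc a b) μ)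
    (hf0 : ∀ᵐ s ∂μ.restrict (Icc a b), 0 ≤ f s) (hg0 : ∀ᵐ s ∂μ.restrict (Icc a b), 0 ≤ g s)
    (hfg : ∀ᵐ s ∂μ.restrict (Icc a b), f s ≤ g s * ∫ u in a..s, f u ∂μ)
    (hx : x ∈ Icc a b) (hy : y ∈ Icc a b) (hxy : x ≤ y)
    (hfx : ∫ s in a..x, f s ∂μ ≤ 0) (hgxy : ∫ s in x..y, g s ∂μ < 1) :
    ∫ s in a..y, f s ∂μ ≤ 0 := by
  have ha : a ∈ Icc a b := left_mem_Icc.2 (hx.1.trans hx.2)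
  let F : ℝ → ℝ := fun t => ∫ s in a..t, f s ∂μ
  have hF_mono : MonotoneOn F (Icc a b) := monotoneOn_integral_of_ae_nonneg hf hf0
  have hsub : Icc x y ⊆ Icc a b := Icc_subset_Icc hx.1 hy.2
  have hstep : ∫ s in x..y, f s ∂μ ≤ (∫ s in x..y, g s ∂μ) * F y := by
    rw [← intervalIntegral.integral_mul_const]
    refine intervalIntegral.integral_mono_ae_restrict hxy
      (intervalIntegrable_of_integrableOn_Icc hf hx hy)
      ((intervalIntegrable_of_integrableOn_Icc hg hx hy).mul_const _) ?_
    filter_upwards [ae_restrict_of_ae_restrict_of_subset hsub hg0,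
      ae_restrict_of_ae_restrict_of_subset hsub hfg, ae_restrict_mem measurableSet_Icc]
      with s hgs hfs hs
    exact hfs.trans (mul_le_mul_of_nonneg_left (hF_mono (hsub hs) hy hs.2) hgs)
  have hadd : F x + ∫ s in x..y, f s ∂μ = F y :=
    intervalIntegral.integral_add_adjacent_intervals
      (intervalIntegrable_of_integrableOn_Icc hf ha hx)
      (intervalIntegrable_of_integrableOn_Icc hf hx hy)
  change F x ≤ 0 at hfx
  change F y ≤ 0
  by_contra! hFy
  linarith [mul_lt_of_lt_one_left hFy hgxy]

theorem integral_nonpos_of_ae_le_mul_integral [NullSingletonClass μ] {f g : ℝ → ℝ}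
    (hf : IntegrableOn f (Icc a b) μ) (hg : IntegrableOn g (Icc a b) μ)
    (hf0 : ∀ᵐ s ∂μ.restrict (Icc a b), 0 ≤ f s) (hg0 : ∀ᵐ s ∂μ.restrict (Icc a b), 0 ≤ g s)
    (hfg : ∀ᵐ s ∂μ.restrict (Icc a b), f s ≤ g s * ∫ u in a..s, f u ∂μ) :
    ∀ t ∈ Icc a b, ∫ s in a..t, f s ∂μ ≤ 0 := by
  intro t ht
  have hab : a ≤ b := ht.1.trans ht.2
  have hcont {h : ℝ → ℝ} (hh : IntegrableOn h (Icc a b) μ) :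
      ContinuousOn (fun t => ∫ s in a..t, h s ∂μ) (Icc a b) := by
    rw [← uIcc_of_le hab] at hh ⊢
    exact intervalIntegral.continuousOn_primitive_interval hh
  suffices Icc a b ⊆ {t | ∫ s in a..t, f s ∂μ ≤ 0} from this ht
  refine IsClosed.Icc_subset_of_forall_mem_nhdsWithin ?_ (by simp) ?_
  · rw [inter_comm]
    exact (hcont hf).preimage_isClosed_of_isClosed isClosed_Icc isClosed_Iic
  · rintro x ⟨hfx, hx⟩
    have hxI : x ∈ Icc a b := Ico_subset_Icc_self hx
    rw [← nhdsWithin_Ioc_eq_nhdsGT hx.2]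
    have hsub : Ioc x b ⊆ Icc a b := Ioc_subset_Icc_self.trans (Icc_subset_Icc_left hx.1)
    have hg_near : ∀ᶠ y in 𝓝[Ioc x b] x, ∫ s in a..y, g s ∂μ < (∫ s in a..x, g s ∂μ) + 1 :=
      ((hcont hg x hxI).mono hsub).eventually_lt_const (lt_add_one _)
    filter_upwards [hg_near, self_mem_nhdsWithin] with y hgy hy
    refine integral_nonpos_of_ae_le_mul_integral_of_integral_lt_one hf hg hf0 hg0 hfg hxI (hsub hy)
      hy.1.le hfx ?_
    have ha : a ∈ Icc a b := left_mem_Icc.2 hab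
    rw [← intervalIntegral.integral_interval_sub_left
      (intervalIntegrable_of_integrableOn_Icc hg ha (hsub hy))
      (intervalIntegrable_of_integrableOn_Icc hg ha hxI)]
    linarith

end Gronwall

section Nonneg

variable {m n R : Type*} [Fintype m] [Fintype n] {M : Matrix m n R}

theorem dotProduct_le_sum_dotProduct_sup_zero [Semiring R] [Lattice R] [IsOrderedRing R]
    (hM : ∀ i, 0 ≤ M i) (w : n → R) (i : m) :
    M i ⬝ᵥ w ≤ ∑ j, M j ⬝ᵥ (w ⊔ 0) :=
  (dotProduct_le_dotProduct_of_nonneg_left le_sup_left (hM i)).trans <|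
    Finset.single_le_sum (f := fun j => M j ⬝ᵥ (w ⊔ 0))
      (fun j _ => dotProduct_nonneg_of_nonneg (hM j) le_sup_right) (Finset.mem_univ i)

theorem sum_dotProduct_le_sum_dotProduct_one_mul [CommSemiring R] [PartialOrder R]
    [IsOrderedRing R] (hM : ∀ i, 0 ≤ M i) {w : n → R} {c : R} (hw : ∀ i, w i ≤ c) :
    ∑ i, M i ⬝ᵥ w ≤ (∑ i, M i ⬝ᵥ 1) * c := by
  rw [Finset.sum_mul]
  refine Finset.sum_le_sum fun i _ => ?_
  calc M i ⬝ᵥ w ≤ M i ⬝ᵥ (c • 1) :=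
        dotProduct_le_dotProduct_of_nonneg_left (fun j => by simpa using hw j) (hM i)
    _ = (M i ⬝ᵥ 1) * c := by rw [dotProduct_smul, smul_eq_mul, mul_comm]

end Nonneg

section VectorInequalities

variable {ι m : Type*} [Fintype ι] [Fintype m] {μ : Measure ℝ} {a b : ℝ}

theorem integrableOn_dotProduct_of_continuousOn {X : Type*} [TopologicalSpace X] [T2Space X]
    [MeasurableSpace X] [OpensMeasurableSpace X] {ν : Measure X} {K : Set X} {κ φ : X → ι → ℝ}
    (hκ : ∀ k, IntegrableOn (fun s => κ s k) K ν) (hφ : ContinuousOn φ K) (hK : IsCompact K) :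
    IntegrableOn (fun s => κ s ⬝ᵥ φ s) K ν :=
  integrable_finsetSum _ fun k _ => (hκ k).mul_continuousOn (continuousOn_pi.1 hφ k) hK

theorem integral_dotProduct_le_dotProduct_integral {κ φ : ℝ → ι → ℝ} {v : ι → ℝ} {t : ℝ}
    (hκ : ∀ k, IntegrableOn (fun s => κ s k) (Icc a b) μ)
    (hκ0 : ∀ᵐ s ∂μ.restrict (Icc a b), 0 ≤ κ s) (hφ : ContinuousOn φ (Icc a b)) (hv : 0 ≤ v)
    (hφv : ∀ s ∈ Icc a b, φ s ≤ v) (ht : t ∈ Icc a b) :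
    ∫ s in a..t, κ s ⬝ᵥ φ s ∂μ ≤ (fun k => ∫ s in a..b, κ s k ∂μ) ⬝ᵥ v := by
  have hab : a ≤ b := ht.1.trans ht.2
  have ha : a ∈ Icc a b := left_mem_Icc.2 hab
  have hb : b ∈ Icc a b := right_mem_Icc.2 hab
  have hκφ : IntegrableOn (fun s => κ s ⬝ᵥ φ s) (Icc a b) μ :=
    integrableOn_dotProduct_of_continuousOn hκ hφ isCompact_Icc
  have hκv : IntegrableOn (fun s => κ s ⬝ᵥ v) (Icc a b) μ :=
    integrableOn_dotProduct_of_continuousOn hκ continuousOn_const isCompact_Icc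
  calc ∫ s in a..t, κ s ⬝ᵥ φ s ∂μ
    _ ≤ ∫ s in a..t, κ s ⬝ᵥ v ∂μ := by
      have hsub : Icc a t ⊆ Icc a b := Icc_subset_Icc_right ht.2
      refine intervalIntegral.integral_mono_ae_restrict ht.1
        (intervalIntegrable_of_integrableOn_Icc hκφ ha ht)
        (intervalIntegrable_of_integrableOn_Icc hκv ha ht) ?_
      filter_upwards [ae_restrict_of_ae_restrict_of_subset hsub hκ0,
        ae_restrict_mem measurableSet_Icc] with s hκs hs
      exact dotProduct_le_dotProduct_of_nonneg_left (hφv s (hsub hs)) hκs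
    _ ≤ ∫ s in a..b, κ s ⬝ᵥ v ∂μ :=
      monotoneOn_integral_of_ae_nonneg hκv
        (hκ0.mono fun _ hκs => dotProduct_nonneg_of_nonneg hκs hv) ht hb ht.2
    _ = (fun k => ∫ s in a..b, κ s k ∂μ) ⬝ᵥ v := by
      simp only [dotProduct]
      rw [intervalIntegral.integral_finsetSum fun k _ =>
        (intervalIntegrable_of_integrableOn_Icc (hκ k) ha hb).mul_const _]
      simp only [intervalIntegral.integral_mul_const]

theorem nonpos_of_le_integral_mulVec [NullSingletonClass μ] {κ : ℝ → Matrix ι ι ℝ}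
    {φ : ℝ → ι → ℝ} (hκ : ∀ i j, IntegrableOn (fun s => κ s i j) (Icc a b) μ)
    (hκ0 : ∀ i, ∀ᵐ s ∂μ.restrict (Icc a b), 0 ≤ κ s i) (hφ : ContinuousOn φ (Icc a b))
    (hle : ∀ t ∈ Icc a b, ∀ i, φ t i ≤ ∫ s in a..t, (κ s *ᵥ φ s) i ∂μ) :
    ∀ t ∈ Icc a b, φ t ≤ 0 := by
  have hφ_pos : ContinuousOn (fun s => φ s ⊔ 0) (Icc a b) :=
    continuousOn_pi.2 fun i => (continuousOn_pi.1 hφ i).sup continuousOn_const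
  have hκφ (i) : IntegrableOn (fun s => κ s i ⬝ᵥ φ s) (Icc a b) μ :=
    integrableOn_dotProduct_of_continuousOn (hκ i) hφ isCompact_Icc
  let f : ℝ → ℝ := fun s => ∑ i, κ s i ⬝ᵥ (φ s ⊔ 0)
  let g : ℝ → ℝ := fun s => ∑ i, κ s i ⬝ᵥ 1
  have hf : IntegrableOn f (Icc a b) μ := integrable_finsetSum _ fun i _ =>
    integrableOn_dotProduct_of_continuousOn (hκ i) hφ_pos isCompact_Icc
  have hg : IntegrableOn g (Icc a b) μ := integrable_finsetSum _ fun i _ =>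
    integrableOn_dotProduct_of_continuousOn (hκ i) continuousOn_const isCompact_Icc
  have hκ0' : ∀ᵐ s ∂μ.restrict (Icc a b), ∀ i, 0 ≤ κ s i := ae_all_iff.2 hκ0
  have hf0 : ∀ᵐ s ∂μ.restrict (Icc a b), 0 ≤ f s := hκ0'.mono fun s hκs =>
    Finset.sum_nonneg fun i _ => dotProduct_nonneg_of_nonneg (hκs i) le_sup_right
  have hg0 : ∀ᵐ s ∂μ.restrict (Icc a b), 0 ≤ g s := hκ0'.mono fun s hκs =>
    Finset.sum_nonneg fun i _ => dotProduct_nonneg_of_nonneg (hκs i) zero_le_one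
  have hφ_le (t) (ht : t ∈ Icc a b) (i) : φ t i ≤ ∫ s in a..t, f s ∂μ := by
    have ha : a ∈ Icc a b := left_mem_Icc.2 (ht.1.trans ht.2)
    refine (hle t ht i).trans (intervalIntegral.integral_mono_ae_restrict ht.1
      (intervalIntegrable_of_integrableOn_Icc (hκφ i) ha ht)
      (intervalIntegrable_of_integrableOn_Icc hf ha ht) ?_)
    filter_upwards [ae_restrict_of_ae_restrict_of_subset (Icc_subset_Icc_right ht.2) hκ0']
      with s hκs
    exact dotProduct_le_sum_dotProduct_sup_zero hκs (φ s) i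
  have hfg : ∀ᵐ s ∂μ.restrict (Icc a b), f s ≤ g s * ∫ u in a..s, f u ∂μ := by
    filter_upwards [hκ0', ae_restrict_mem measurableSet_Icc] with s hκs hs
    have hF0 : 0 ≤ ∫ u in a..s, f u ∂μ := intervalIntegral.integral_nonneg_of_ae_restrict hs.1
      (ae_restrict_of_ae_restrict_of_subset (Icc_subset_Icc_right hs.2) hf0)
    exact sum_dotProduct_le_sum_dotProduct_one_mul hκs fun i => sup_le (hφ_le s hs i) hF0
  exact fun t ht i =>
    (hφ_le t ht i).trans (integral_nonpos_of_ae_le_mul_integral hf hg hf0 hg0 hfg t ht)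

theorem nonpos_of_le_mulVec_integral_add_integral [DecidableEq ι] {G : Matrix ι m ℝ}
    {κ : ℝ → Matrix ι ι ℝ} {κ' : ℝ → Matrix m ι ℝ} {φ : ℝ → ι → ℝ} (hG : ∀ i, 0 ≤ G i)
    (hκ : ∀ i j, IntegrableOn (fun s => κ s i j) (Icc a b) μ)
    (hκ' : ∀ i j, IntegrableOn (fun s => κ' s i j) (Icc a b) μ)
    (hκ0 : ∀ i, ∀ᵐ s ∂μ.restrict (Icc a b), 0 ≤ κ s i)
    (hκ'0 : ∀ i, ∀ᵐ s ∂μ.restrict (Icc a b), 0 ≤ κ' s i)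
    (hρ : spectralRadius ℂ ((G * (of fun i j => ∫ s in a..b, κ' s i j ∂μ) +
      of fun i j => ∫ s in a..b, κ s i j ∂μ).map Complex.ofReal) < 1)
    (hφ : ContinuousOn φ (Icc a b))
    (hle : ∀ t ∈ Icc a b, ∀ i, φ t i ≤
      (G *ᵥ fun j => ∫ s in a..b, (κ' s *ᵥ φ s) j ∂μ) i + ∫ s in a..t, (κ s *ᵥ φ s) i ∂μ) :
    ∀ t ∈ Icc a b, φ t ≤ 0 := by
  intro t₀ ht₀
  have hab : a ≤ b := ht₀.1.trans ht₀.2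
  set A : Matrix m ι ℝ := of fun i j => ∫ s in a..b, κ' s i j ∂μ
  set B : Matrix ι ι ℝ := of fun i j => ∫ s in a..b, κ s i j ∂μ
  have hint0 {f : ℝ → ι → ℝ} (hf : ∀ᵐ s ∂μ.restrict (Icc a b), 0 ≤ f s) (j) :
      0 ≤ ∫ s in a..b, f s j ∂μ :=
    intervalIntegral.integral_nonneg_of_ae_restrict hab (hf.mono fun _ hs => hs j)
  have hH0 (i) : 0 ≤ (G * A + B) i := fun j =>
    add_nonneg (dotProduct_nonneg_of_nonneg (hG i) fun k => hint0 (hκ'0 k) j) (hint0 (hκ0 i) j)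
  have hmax (i) : ∃ x ∈ Icc a b, IsMaxOn (fun t => φ t i ⊔ 0) (Icc a b) x :=
    isCompact_Icc.exists_isMaxOn (nonempty_Icc.2 hab)
      ((continuousOn_pi.1 hφ i).sup continuousOn_const)
  choose x hx hx_max using hmax
  let v : ι → ℝ := fun i => φ (x i) i ⊔ 0
  have hv0 : 0 ≤ v := fun i => le_sup_right
  have hφv : ∀ t ∈ Icc a b, φ t ≤ v := fun t ht i => le_sup_left.trans (hx_max i ht)
  have hφ_le (t) (ht : t ∈ Icc a b) : φ t ≤ (G * A + B) *ᵥ v := by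
    intro i
    rw [add_mulVec, ← mulVec_mulVec]
    exact (hle t ht i).trans <| add_le_add
      (dotProduct_le_dotProduct_of_nonneg_left (fun j => integral_dotProduct_le_dotProduct_integral
        (hκ' j) (hκ'0 j) hφ hv0 hφv (right_mem_Icc.2 hab)) (hG i))
      (integral_dotProduct_le_dotProduct_integral (hκ i) (hκ0 i) hφ hv0 hφv ht)
  have hv_le : v ≤ (G * A + B) *ᵥ v := fun i =>
    sup_le (hφ_le (x i) (hx i) i) (dotProduct_nonneg_of_nonneg (hH0 i) hv0)
  exact (hφv t₀ ht₀).trans (nonpos_of_le_mulVec_of_spectralRadius_lt_one hH0 hρ hv_le)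

theorem nonpos_of_le_mulVec_integral_add_integral_of_mem_Icc [DecidableEq ι] [NullSingletonClass μ]
    {c : ℝ} (hb : b ∈ Icc a c) {G : Matrix ι m ℝ} {κ : ℝ → Matrix ι ι ℝ}
    {κ' : ℝ → Matrix m ι ℝ} {φ : ℝ → ι → ℝ} (hG : ∀ i, 0 ≤ G i)
    (hκ : ∀ i j, IntegrableOn (fun s => κ s i j) (Icc a c) μ)
    (hκ' : ∀ i j, IntegrableOn (fun s => κ' s i j) (Icc a b) μ)
    (hκ0 : ∀ i, ∀ᵐ s ∂μ.restrict (Icc a c), 0 ≤ κ s i)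
    (hκ'0 : ∀ i, ∀ᵐ s ∂μ.restrict (Icc a b), 0 ≤ κ' s i)
    (hρ : spectralRadius ℂ ((G * (of fun i j => ∫ s in a..b, κ' s i j ∂μ) +
      of fun i j => ∫ s in a..b, κ s i j ∂μ).map Complex.ofReal) < 1)
    (hφ : ContinuousOn φ (Icc a c))
    (hle : ∀ t ∈ Icc a c, ∀ i, φ t i ≤
      (G *ᵥ fun j => ∫ s in a..b, (κ' s *ᵥ φ s) j ∂μ) i + ∫ s in a..t, (κ s *ᵥ φ s) i ∂μ) :
    ∀ t ∈ Icc a c, φ t ≤ 0 := by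
  have hsub : Icc a b ⊆ Icc a c := Icc_subset_Icc_right hb.2
  have hφ_left : ∀ t ∈ Icc a b, φ t ≤ 0 :=
    nonpos_of_le_mulVec_integral_add_integral hG (fun i j => (hκ i j).mono_set hsub) hκ'
      (fun i => ae_restrict_of_ae_restrict_of_subset hsub (hκ0 i)) hκ'0 hρ (hφ.mono hsub)
      fun t ht => hle t (hsub ht)
  have hnonlocal : (fun j => ∫ s in a..b, (κ' s *ᵥ φ s) j ∂μ) ≤ 0 := fun j =>
    (integral_dotProduct_le_dotProduct_integral (hκ' j) (hκ'0 j) (hφ.mono hsub) le_rfl hφ_left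
      (right_mem_Icc.2 hb.1)).trans_eq (dotProduct_zero _)
  refine nonpos_of_le_integral_mulVec hκ hκ0 hφ fun t ht i => (hle t ht i).trans ?_
  exact add_le_of_nonpos_left <|
    (dotProduct_le_dotProduct_of_nonneg_left hnonlocal (hG i)).trans_eq (dotProduct_zero _)

end VectorInequalities

theorem stmt_15_general {ι : Type*} [Fintype ι] [DecidableEq ι] {μ : Measure ℝ}
    [NullSingletonClass μ] {a b : ℝ} (hb : b ∈ Icc 0 a)
    {G₀ : Matrix ι ι ℝ} (hG₀ : ∀ i j, 0 ≤ G₀ i j) {γ γt : ℝ → Matrix ι ι ℝ}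
    (hγint : ∀ i j, IntegrableOn (fun s => γ s i j) (Icc 0 a) μ)
    (hγtint : ∀ i j, IntegrableOn (fun s => γt s i j) (Icc 0 a) μ)
    (hγ0 : ∀ i j, ∀ᵐ s ∂μ.restrict (Icc 0 a), 0 ≤ γ s i j)
    (hγt0 : ∀ i j, ∀ᵐ s ∂μ.restrict (Icc 0 a), 0 ≤ γt s i j)
    (hρ : spectralRadius ℂ ((2 • (G₀ * (of fun i j => ∫ s in (0 : ℝ)..b, γt s i j ∂μ) +
      of fun i j => ∫ s in (0 : ℝ)..b, γ s i j ∂μ)).map Complex.ofReal) < 1)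
    {φ : ℝ → ι → ℝ} (hφ : ContinuousOn φ (Icc 0 a))
    (hle : ∀ t ∈ Icc 0 a, ∀ i, φ t i ≤
      2 * (G₀ *ᵥ fun j => ∫ s in (0 : ℝ)..b, (γt s *ᵥ φ s) j ∂μ) i +
        2 * ∫ s in (0 : ℝ)..t, (γ s *ᵥ φ s) i ∂μ) :
    ∀ t ∈ Icc 0 a, φ t ≤ 0 := by
  have hsub : Icc 0 b ⊆ Icc 0 a := Icc_subset_Icc_right hb.2
  have hH : ((2 : ℝ) • G₀) * (of fun i j => ∫ s in (0 : ℝ)..b, γt s i j ∂μ) +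
      (of fun i j => ∫ s in (0 : ℝ)..b, ((2 : ℝ) • γ s) i j ∂μ) =
      2 • (G₀ * (of fun i j => ∫ s in (0 : ℝ)..b, γt s i j ∂μ) +
        of fun i j => ∫ s in (0 : ℝ)..b, γ s i j ∂μ) := by
    rw [smul_mul, smul_add, ofNat_smul_eq_nsmul, ofNat_smul_eq_nsmul]
    ext i j
    simp
  refine nonpos_of_le_mulVec_integral_add_integral_of_mem_Icc (G := (2 : ℝ) • G₀)
    (κ := fun s => (2 : ℝ) • γ s) hb
    (fun i j => mul_nonneg zero_le_two (hG₀ i j)) (fun i j => (hγint i j).const_mul 2)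
    (fun i j => (hγtint i j).mono_set hsub)
    (fun i => (ae_all_iff.2 (hγ0 i)).mono fun s hs j => mul_nonneg zero_le_two (hs j))
    (fun i => ae_restrict_of_ae_restrict_of_subset hsub (ae_all_iff.2 (hγt0 i)))
    (by rwa [hH]) hφ ?_
  simpa only [smul_mulVec, Pi.smul_apply, smul_eq_mul, intervalIntegral.integral_const_mul]
    using hle

/-- **Vector-valued vanishing lemma (key step in the proof of Theorem 3.1).** If
`H = 2(G₀·Γ̃ + Γ)` has spectral radius `< 1` and the continuous nonnegative vector
function `φ` satisfies `φ(t) ≤ 2G₀·∫₀ᵇ γ̃φ + 2∫₀ᵗ γφ` componentwise on `[0,a]`,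
then `φ ≡ 0` on `[0,a]`. -/
theorem stmt_15
    {n : ℕ} {a b : ℝ} (ha : 0 < a) (hb : b ∈ Set.Icc (0:ℝ) a)
    (G₀ : Matrix (Fin n) (Fin n) ℝ) (hG₀ : ∀ i j, 0 ≤ G₀ i j)
    (γ γt : ℝ → Matrix (Fin n) (Fin n) ℝ)
    (hγint : ∀ i j, IntegrableOn (fun s => γ s i j) (Set.Icc 0 a))
    (hγtint : ∀ i j, IntegrableOn (fun s => γt s i j) (Set.Icc 0 a))
    (hγ0 : ∀ i j, ∀ᵐ s ∂(volume.restrict (Set.Icc 0 a)), 0 ≤ γ s i j)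
    (hγt0 : ∀ i j, ∀ᵐ s ∂(volume.restrict (Set.Icc 0 a)), 0 ≤ γt s i j)
    (hγtγ : ∀ i j, ∀ᵐ s ∂(volume.restrict (Set.Icc 0 a)), γt s i j ≤ γ s i j)
    (hρ : spectralRadius ℂ
      ((2 • (G₀ * (Matrix.of fun i j => ∫ s in (0:ℝ)..b, γt s i j) +
        (Matrix.of fun i j => ∫ s in (0:ℝ)..b, γ s i j))).map Complex.ofReal) < 1)
    (φ : ℝ → Fin n → ℝ)
    (hφc : ∀ i, ContinuousOn (fun t => φ t i) (Set.Icc 0 a))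
    (hφ0 : ∀ t ∈ Set.Icc (0:ℝ) a, ∀ i, 0 ≤ φ t i)
    (hineq : ∀ t ∈ Set.Icc (0:ℝ) a, ∀ i,
      φ t i ≤ 2 * (∑ j, G₀ i j * ∫ s in (0:ℝ)..b, ∑ k, γt s j k * φ s k) +
        2 * ∫ s in (0:ℝ)..t, ∑ k, γ s i k * φ s k) :
    ∀ t ∈ Set.Icc (0:ℝ) a, φ t = 0 := by
  intro t ht
  exact le_antisymm (stmt_15_general hb hG₀ hγint hγtint hγ0 hγt0 hρ (continuousOn_pi.2 hφc) hineq
    t ht) (hφ0 t ht)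
end
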